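/- There exists a finite simple graph G such that G is a 3-tree, G admits a straight-line plane drawing (i.e., G is a planar 3-tree), and for every straight-line plane drawing p of G there is no 1-string representation of G that is order-preserving with respect to p. -/

import Mathlib

/-- An arc: an injective continuous map from `[0,1]` to `ℝ²`
(formalized as a map `ℝ → ℝ × ℝ` that is continuous and injective on `[0,1]`). -/
structure Arc where
  toFun : ℝ → ℝ × ℝ
  contOn : ContinuousOn toFun (Set.Icc 0 1)
  injOn : Set.InjOn toFun (Set.Icc 0 1)

/-- The image of an arc. -/
def Arc.img (γ : Arc) : Set (ℝ × ℝ) := γ.toFun '' Set.Icc 0 1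

/-- The endpoints of an arc. -/
def Arc.ends (γ : Arc) : Set (ℝ × ℝ) := {γ.toFun 0, γ.toFun 1}

/-- Two arcs cross properly at `q`: `q` is an interior point of both arcs, and there is
an open neighbourhood of `q` mapped homeomorphically onto the open unit disk with `q ↦ 0`,
taking the first arc to the horizontal diameter and the second to the vertical diameter. -/
def CrossesProperlyAt (γ₁ γ₂ : Arc) (q : ℝ × ℝ) : Prop :=
  (∃ s ∈ Set.Ioo (0:ℝ) 1, γ₁.toFun s = q) ∧
  (∃ t ∈ Set.Ioo (0:ℝ) 1, γ₂.toFun t = q) ∧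
  ∃ h : PartialHomeomorph (ℝ × ℝ) (ℝ × ℝ),
    q ∈ h.source ∧ h.target = Metric.ball (0 : ℝ × ℝ) 1 ∧ h q = 0 ∧
    h '' (h.source ∩ γ₁.img) = {z : ℝ × ℝ | z ∈ Metric.ball (0 : ℝ × ℝ) 1 ∧ z.2 = 0} ∧
    h '' (h.source ∩ γ₂.img) = {z : ℝ × ℝ | z ∈ Metric.ball (0 : ℝ × ℝ) 1 ∧ z.1 = 0}

/-- A 1-string representation of a simple graph `G`. -/
structure OneStringRep {V : Type} (G : SimpleGraph V) where
  γ : V → Arc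
  adj_inter : ∀ u v : V, G.Adj u v → ∃ q : ℝ × ℝ, (γ u).img ∩ (γ v).img = {q}
  nonadj_disjoint : ∀ u v : V, u ≠ v → ¬G.Adj u v → (γ u).img ∩ (γ v).img = ∅
  proper : ∀ u v : V, u ≠ v → ∀ q ∈ (γ u).img ∩ (γ v).img, CrossesProperlyAt (γ u) (γ v) q
  no_triple : ∀ u v w : V, u ≠ v → u ≠ w → v ≠ w → (γ u).img ∩ (γ v).img ∩ (γ w).img = ∅

/-- A straight-line plane drawing of a simple graph. -/
def IsPlaneDrawing {V : Type} (G : SimpleGraph V) (p : V → ℝ × ℝ) : Prop :=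
  Function.Injective p ∧
  (∀ u v x y : V, G.Adj u v → G.Adj x y → u ≠ x → u ≠ y → v ≠ x → v ≠ y →
    segment ℝ (p u) (p v) ∩ segment ℝ (p x) (p y) = ∅) ∧
  (∀ u v w : V, G.Adj u v → G.Adj u w → v ≠ w →
    segment ℝ (p u) (p v) ∩ segment ℝ (p u) (p w) = {p u}) ∧
  (∀ u v w : V, G.Adj u v → w ≠ u → w ≠ v → p w ∉ segment ℝ (p u) (p v))

/-- The angle of the vector from `a` to `b`. -/
noncomputable def angleAt (a b : ℝ × ℝ) : ℝ := Complex.arg ⟨b.1 - a.1, b.2 - a.2⟩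

/-- A 1-string representation is order-preserving w.r.t. a straight-line plane drawing `p`:
for each vertex `v`, listing the neighbours `w₁, …, w_k` sorted by the angle of `p wᵢ - p v`,
there are a traversal direction of `γ v` and a cyclic rotation of the list such that the
intersection points of `γ v` with the `γ wᵢ` occur along `γ v`, in that traversal direction,
exactly in the rotated order. -/
def OrderPreserving {V : Type} (G : SimpleGraph V) (p : V → ℝ × ℝ)
    (R : OneStringRep G) : Prop :=
  ∀ v : V, ∃ l : List V,
    l.Nodup ∧ (∀ w : V, w ∈ l ↔ G.Adj v w) ∧
    l.Pairwise (fun w w' => angleAt (p v) (p w) < angleAt (p v) (p w')) ∧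
    ∃ (r : ℕ) (dir : Bool) (t : V → ℝ),
      (∀ w ∈ l, t w ∈ Set.Icc (0:ℝ) 1 ∧ (R.γ v).toFun (t w) ∈ (R.γ w).img) ∧
      (l.rotate r).Pairwise (fun w w' => if dir then t w < t w' else t w' < t w)

/-- The union of the images of a family of arcs. -/
def arcUnion {V : Type} (γ : V → Arc) : Set (ℝ × ℝ) := ⋃ v, (γ v).img

/-- The contour of a family of arcs: the unbounded connected component of the complement of
the union of the images (formalized as the union of all unbounded connected components). -/
def contour {V : Type} (γ : V → Arc) : Set (ℝ × ℝ) :=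
  {x | x ∈ (arcUnion γ)ᶜ ∧ ¬ Bornology.IsBounded (connectedComponentIn (arcUnion γ)ᶜ x)}

/-- A `k`-tree: there is an ordering of the vertices such that the first `k` form a clique and
every later vertex has exactly `k` earlier neighbours, which form a clique. -/
def IsKTree {V : Type} (k : ℕ) (G : SimpleGraph V) : Prop :=
  ∃ (n : ℕ) (e : V ≃ Fin n), k ≤ n ∧
    G.IsClique {v : V | (e v).val < k} ∧
    ∀ i : Fin n, k ≤ i.val →
      ∃ S : Finset V, S.card = k ∧
        (∀ w : V, w ∈ S ↔ G.Adj (e.symm i) w ∧ (e w).val < i.val) ∧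
        G.IsClique ↑S

/-- An L-shape: an arc whose image is the union of a vertical segment from `(x, y+h)` to
`(x, y)` and a horizontal segment from `(x, y)` to `(x+w, y)` with `w, h > 0`. -/
def IsLShape (γ : Arc) : Prop :=
  ∃ x y w h : ℝ, 0 < w ∧ 0 < h ∧
    γ.img = segment ℝ (x, y + h) (x, y) ∪ segment ℝ (x, y) (x + w, y)

/-- A 1-bend orthogonal arc: its image is a single horizontal or vertical segment, or the
union of a horizontal segment and a vertical segment sharing exactly one endpoint. -/
def IsOneBendOrth (γ : Arc) : Prop :=
  (∃ a b : ℝ × ℝ, a ≠ b ∧ (a.1 = b.1 ∨ a.2 = b.2) ∧ γ.img = segment ℝ a b) ∨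
  (∃ a b c : ℝ × ℝ, a ≠ b ∧ b ≠ c ∧
    ((a.1 = b.1 ∧ b.2 = c.2) ∨ (a.2 = b.2 ∧ b.1 = c.1)) ∧
    γ.img = segment ℝ a b ∪ segment ℝ b c ∧ segment ℝ a b ∩ segment ℝ b c = {b})

/-- A graph is 2-connected if it has at least 3 vertices and deleting any single vertex
leaves a connected graph. -/
def TwoConnected {V : Type} (G : SimpleGraph V) : Prop :=
  3 ≤ Nat.card V ∧ ∀ v : V, ((⊤ : G.Subgraph).deleteVerts {v}).coe.Connected

/-! Order preservation enters only through the link of each vertex `b`: disjoint edges between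
neighbours of `b` do not cross in a plane drawing, so they do not interleave in the order in which
the string of `b` meets the strings of its neighbours. Topology enters only through one fact: if two
strings cross properly, exactly once, and parts of them around the crossing are closed up to two
closed curves, then the closing curves must meet these parts or each other, because two closed
curves cannot have a single proper crossing. This is proved by computing in two ways the variation
of the logarithm of `f s - k t` along the boundary of a square, for the two strings `f` and `k` near
the crossing. It vanishes if the rest of the two curves is disjoint, but near the crossing
`f s - k t` deforms to an odd function, whose variation is an odd multiple of `2πi`.

The graph is a bipyramid over a path, with adjacent poles, and an apex stacked on each face spanned
by a pole and a rim edge. The string of each pole meets that of the other pole in at most one gap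
between consecutive rim strings, so on a long enough rim four consecutive gaps are free of such
crossings. If `L A B Q` is a piece of the rim whose three gaps are free, closed curves through the
apices over `A B` show that on the string of `B` the string of `Q` is met between those of `A` and
one of the poles; symmetrically, on the string of `A` that of `L` is met between those of `B` and
one of the poles. For two consecutive such pieces these are contradictory demands on the string of
the middle rim vertex. -/

/-! ### Variation of the logarithm -/

section LogVariation

open Set Complex

theorem exists_continuousOn_log {E : Type*} [AddCommGroup E] [Module ℝ E]
    [TopologicalSpace E] [IsTopologicalAddGroup E] [ContinuousSMul ℝ E] [LocallyConvexSpace ℝ E]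
    {s : Set E} (hs : Convex ℝ s) {f : E → ℂ} (hf : ContinuousOn f s) (hf₀ : ∀ x ∈ s, f x ≠ 0) :
    ∃ L : E → ℂ, ContinuousOn L s ∧ ∀ x ∈ s, exp (L x) = f x := by
  rcases s.eq_empty_or_nonempty with rfl | ⟨a, ha⟩
  · exact ⟨0, continuousOn_empty _, fun x hx => absurd hx (notMem_empty x)⟩
  have := hs.contractibleSpace ⟨a, ha⟩
  have := hs.locallyPathConnectedSpace
  obtain ⟨L, ⟨-, hL⟩, -⟩ := isCoveringMapOn_exp.existsUnique_continuousMap_lifts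
    ⟨s.domRestrict f, continuousOn_iff_continuous_domRestrict.1 hf⟩ (a₀ := ⟨a, ha⟩)
    (exp_log (hf₀ a ha)) fun x => hf₀ x x.2
  let L' : E → ℂ := Function.extend Subtype.val L 0
  have extend_eq (x : s) : L' x = L x := Subtype.val_injective.extend_apply L 0 x
  refine ⟨L', ?_, fun x hx => ?_⟩
  · rw [continuousOn_iff_continuous_domRestrict]
    exact L.continuous.congr fun x => (extend_eq x).symm
  · rw [extend_eq ⟨x, hx⟩]
    exact congrFun hL ⟨x, hx⟩

theorem sub_eq_sub_of_exp_eq_exp {X : Type*} [TopologicalSpace X] {s : Set X}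
    (hs : IsPreconnected s) {L L' : X → ℂ} (hL : ContinuousOn L s) (hL' : ContinuousOn L' s)
    (h : ∀ x ∈ s, exp (L x) = exp (L' x)) {a b : X} (ha : a ∈ s) (hb : b ∈ s) :
    L b - L a = L' b - L' a := by
  have hexp {x : X} (hx : x ∈ s) : exp (L x - L' x) = 1 := by
    rw [exp_sub, h x hx, div_self (exp_ne_zero _)]
  have hconst : L b - L' b = L a - L' a :=
    isCoveringMap_exp.constOn_of_comp hs (hL.sub hL')
      (fun x hx y hy => Subtype.ext ((hexp hx).trans (hexp hy).symm)) hb ha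
  linear_combination hconst

/-- The variation along `[-1, 1]` of a continuous logarithm of `f`; it is `0` if `f` has none. -/
noncomputable def logVariation (f : ℝ → ℂ) : ℂ :=
  open Classical in
  if h : ∃ L : ℝ → ℂ, ContinuousOn L (Icc (-1) 1) ∧ ∀ t ∈ Icc (-1) 1, exp (L t) = f t then
    h.choose 1 - h.choose (-1) else 0

theorem logVariation_eq {f L : ℝ → ℂ} (hL : ContinuousOn L (Icc (-1) 1))
    (h : ∀ t ∈ Icc (-1) 1, exp (L t) = f t) : logVariation f = L 1 - L (-1) := by
  have hex : ∃ L : ℝ → ℂ, ContinuousOn L (Icc (-1) 1) ∧ ∀ t ∈ Icc (-1) 1, exp (L t) = f t :=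
    ⟨L, hL, h⟩
  rw [logVariation, dif_pos hex]
  refine sub_eq_sub_of_exp_eq_exp isPreconnected_Icc hex.choose_spec.1 hL
    (fun t ht => ?_) (by norm_num) (by norm_num)
  rw [hex.choose_spec.2 t ht, h t ht]

theorem exp_logVariation {f : ℝ → ℂ} (hf : ContinuousOn f (Icc (-1) 1))
    (hf₀ : ∀ t ∈ Icc (-1) 1, f t ≠ 0) : exp (logVariation f) = f 1 / f (-1) := by
  obtain ⟨L, hL, hexp⟩ := exists_continuousOn_log (convex_Icc (-1) 1) hf hf₀
  rw [logVariation_eq hL hexp, exp_sub, hexp 1 (by norm_num), hexp (-1) (by norm_num)]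

theorem logVariation_neg_comp_neg {f : ℝ → ℂ} (hf : ContinuousOn f (Icc (-1) 1))
    (hf₀ : ∀ t ∈ Icc (-1) 1, f t ≠ 0) :
    logVariation (fun t => -f (-t)) = -logVariation f := by
  obtain ⟨L, hL, hexp⟩ := exists_continuousOn_log (convex_Icc (-1) 1) hf hf₀
  have neg_mem {t : ℝ} (ht : t ∈ Icc (-1) 1) : -t ∈ Icc (-1 : ℝ) 1 :=
    ⟨neg_le_neg ht.2, neg_le.2 ht.1⟩
  rw [logVariation_eq hL hexp, logVariation_eq (L := fun t => L (-t) + Real.pi * I)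
    ((hL.comp continuousOn_neg fun t => neg_mem).add continuousOn_const)]
  · simp
  · intro t ht
    rw [exp_add, exp_pi_mul_I, hexp _ (neg_mem ht), mul_neg_one]

/-- The variation of a continuous logarithm of `F` along the boundary of the square `[-1, 1]²`,
traversed counterclockwise: `2πi` times the winding number about `0`. -/
noncomputable def boundaryLogVariation (F : ℝ × ℝ → ℂ) : ℂ :=
  logVariation (fun t => F (t, -1)) + logVariation (fun t => F (1, t)) -
    logVariation (fun t => F (t, 1)) - logVariation (fun t => F (-1, t))

theorem boundaryLogVariation_eq_zero {F : ℝ × ℝ → ℂ} (hF : ContinuousOn F (Icc (-1) 1))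
    (hF₀ : ∀ z ∈ Icc (-1) 1, F z ≠ 0) : boundaryLogVariation F = 0 := by
  obtain ⟨L, hL, hexp⟩ := exists_continuousOn_log (convex_Icc (-1) 1) hF hF₀
  have side {e : ℝ → ℝ × ℝ} (he : Continuous e) (hmem : MapsTo e (Icc (-1) 1) (Icc (-1) 1)) :
      logVariation (fun t => F (e t)) = L (e 1) - L (e (-1)) :=
    logVariation_eq (hL.comp he.continuousOn hmem) fun t ht => hexp _ (hmem ht)
  rw [boundaryLogVariation, side (by fun_prop) fun t ht => by simpa [Prod.le_def] using ht,
    side (by fun_prop) fun t ht => by simpa [Prod.le_def] using ht,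
    side (by fun_prop) fun t ht => by simpa [Prod.le_def] using ht,
    side (by fun_prop) fun t ht => by simpa [Prod.le_def] using ht]
  ring

theorem boundaryLogVariation_eq_of_homotopy {H : ℝ → ℝ × ℝ → ℂ}
    (hH : ContinuousOn (Function.uncurry H) (Icc (-1) 1 ×ˢ Metric.sphere 0 1))
    (hH₀ : ∀ s ∈ Icc (-1) 1, ∀ z ∈ Metric.sphere 0 1, H s z ≠ 0) :
    boundaryLogVariation (H (-1)) = boundaryLogVariation (H 1) := by
  have side {e : ℝ → ℝ × ℝ} (he : Continuous e)
      (hmem : MapsTo e (Icc (-1) 1) (Metric.sphere 0 1)) :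
      logVariation (fun s => H s (e (-1))) + logVariation (fun t => H 1 (e t)) -
        logVariation (fun s => H s (e 1)) - logVariation (fun t => H (-1) (e t)) = 0 := by
    refine boundaryLogVariation_eq_zero (F := fun z => H z.1 (e z.2))
      (hH.comp (f := fun z : ℝ × ℝ => (z.1, e z.2)) (by fun_prop) fun z hz => ?_) fun z hz => ?_
    · exact ⟨⟨hz.1.1, hz.2.1⟩, hmem ⟨hz.1.2, hz.2.2⟩⟩
    · exact hH₀ _ ⟨hz.1.1, hz.2.1⟩ _ (hmem ⟨hz.1.2, hz.2.2⟩)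
  have bottom := side (e := fun t => (t, -1)) (by fun_prop) fun t ht => by
    simpa [Prod.norm_def, abs_le] using ht
  have right := side (e := fun t => (1, t)) (by fun_prop) fun t ht => by
    simpa [Prod.norm_def, abs_le] using ht
  have top := side (e := fun t => (t, 1)) (by fun_prop) fun t ht => by
    simpa [Prod.norm_def, abs_le] using ht
  have left := side (e := fun t => (-1, t)) (by fun_prop) fun t ht => by
    simpa [Prod.norm_def, abs_le] using ht
  simp only [boundaryLogVariation]
  linear_combination -bottom - right + top + left

theorem boundaryLogVariation_ne_zero_of_odd {F : ℝ × ℝ → ℂ}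
    (hF : ContinuousOn F (Metric.sphere 0 1)) (hF₀ : ∀ z ∈ Metric.sphere 0 1, F z ≠ 0)
    (hodd : ∀ z, F (-z) = -F z) : boundaryLogVariation F ≠ 0 := by
  have hright : MapsTo (fun t : ℝ => ((1 : ℝ), t)) (Icc (-1) 1) (Metric.sphere 0 1) :=
    fun t ht => by simpa [Prod.norm_def, abs_le] using ht
  have htop : MapsTo (fun t : ℝ => (t, (1 : ℝ))) (Icc (-1) 1) (Metric.sphere 0 1) :=
    fun t ht => by simpa [Prod.norm_def, abs_le] using ht
  have cright : ContinuousOn (fun t => F (1, t)) (Icc (-1) 1) := hF.comp (by fun_prop) hright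
  have ctop : ContinuousOn (fun t => F (t, 1)) (Icc (-1) 1) := hF.comp (by fun_prop) htop
  have left : logVariation (fun t => F (-1, t)) = -logVariation (fun t => F (1, t)) := by
    rw [← logVariation_neg_comp_neg cright fun t ht => hF₀ _ (hright ht)]
    simp [← hodd]
  have bottom : logVariation (fun t => F (t, -1)) = -logVariation (fun t => F (t, 1)) := by
    rw [← logVariation_neg_comp_neg ctop fun t ht => hF₀ _ (htop ht)]
    simp [← hodd]
  intro hzero
  have heq : logVariation (fun t => F (1, t)) = logVariation (fun t => F (t, 1)) := by
    rw [boundaryLogVariation, left, bottom] at hzero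
    linear_combination hzero / 2
  have hexp := congrArg exp heq
  rw [exp_logVariation cright fun t ht => hF₀ _ (hright ht),
    exp_logVariation ctop fun t ht => hF₀ _ (htop ht)] at hexp
  have hcorner : F (-1, 1) = -F (1, -1) := by simpa using hodd (1, -1)
  have h₁ : F (1, 1) ≠ 0 := hF₀ _ (hright (by norm_num))
  have h₂ : F (1, -1) ≠ 0 := hF₀ _ (hright (by norm_num))
  rw [hcorner, div_neg] at hexp
  exact div_ne_zero h₁ h₂ (self_eq_neg.1 hexp)

-- The torus of pairs of points of the two closed curves is cut into four squares; the
-- difference vanishes on at most one of them.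
theorem boundaryLogVariation_sub_eq_zero {f k α β : ℝ → ℂ} (hf : ContinuousOn f (Icc (-1) 1))
    (hk : ContinuousOn k (Icc (-1) 1)) (hα : ContinuousOn α (Icc (-1) 1))
    (hβ : ContinuousOn β (Icc (-1) 1)) (hα₀ : α (-1) = f 1) (hα₁ : α 1 = f (-1))
    (hβ₀ : β (-1) = k 1) (hβ₁ : β 1 = k (-1))
    (hfβ : ∀ s ∈ Icc (-1) 1, ∀ t ∈ Icc (-1) 1, f s ≠ β t)
    (hαk : ∀ s ∈ Icc (-1) 1, ∀ t ∈ Icc (-1) 1, α s ≠ k t)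
    (hαβ : ∀ s ∈ Icc (-1) 1, ∀ t ∈ Icc (-1) 1, α s ≠ β t) :
    boundaryLogVariation (fun z => f z.1 - k z.2) = 0 := by
  have square {u v : ℝ → ℂ} (hu : ContinuousOn u (Icc (-1) 1)) (hv : ContinuousOn v (Icc (-1) 1))
      (huv : ∀ s ∈ Icc (-1) 1, ∀ t ∈ Icc (-1) 1, u s ≠ v t) :
      boundaryLogVariation (fun z => u z.1 - v z.2) = 0 :=
    boundaryLogVariation_eq_zero
      ((hu.comp continuousOn_fst fun z hz => ⟨hz.1.1, hz.2.1⟩).sub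
        (hv.comp continuousOn_snd fun z hz => ⟨hz.1.2, hz.2.2⟩))
      fun z hz => sub_ne_zero.2 (huv _ ⟨hz.1.1, hz.2.1⟩ _ ⟨hz.1.2, hz.2.2⟩)
  have h₁ := square hf hβ hfβ
  have h₂ := square hα hk hαk
  have h₃ := square hα hβ hαβ
  simp only [boundaryLogVariation, hα₀, hα₁, hβ₀, hβ₁] at h₁ h₂ h₃ ⊢
  linear_combination -h₁ - h₂ - h₃

theorem mem_square_of_mem_sphere {z : ℝ × ℝ} (hz : z ∈ Metric.sphere 0 1) : z ∈ Icc (-1) 1 := by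
  have hz₁ := (mem_sphere_zero_iff_norm.1 hz).le
  have hfst := abs_le.1 ((norm_fst_le z).trans hz₁)
  have hsnd := abs_le.1 ((norm_snd_le z).trans hz₁)
  exact ⟨⟨hfst.1, hsnd.1⟩, hfst.2, hsnd.2⟩

theorem sub_smul_mem_square {z : ℝ × ℝ} (hz : z ∈ Icc (-1) 1) {c : ℝ} (hc : c ∈ Icc 0 1) :
    (z.1, 0) - c • z ∈ Icc (-1) 1 ∧ (0, z.2) - c • z ∈ Icc (-1) 1 := by
  obtain ⟨⟨h₁, h₂⟩, h₃, h₄⟩ := hz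
  obtain ⟨hc₀, hc₁⟩ := hc
  simp only [Prod.fst_neg, Prod.snd_neg, Prod.fst_one, Prod.snd_one] at h₁ h₂ h₃ h₄
  simp only [mem_Icc, Prod.le_def, Prod.fst_neg, Prod.snd_neg, Prod.fst_one, Prod.snd_one,
    Prod.fst_sub, Prod.snd_sub, Prod.smul_fst, Prod.smul_snd, smul_eq_mul]
  refine ⟨⟨⟨?_, ?_⟩, ?_, ?_⟩, ⟨?_, ?_⟩, ?_, ?_⟩ <;> nlinarith

-- The deformation moves the two arguments `(x, 0)`, `(0, y)` of `g` along `-(x, y)` until they are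
-- opposite points, which makes the difference an odd function of `(x, y)`.
theorem boundaryLogVariation_sub_ne_zero {g : ℝ × ℝ → ℂ} (hg : ContinuousOn g (Icc (-1) 1))
    (hinj : InjOn g (Icc (-1) 1)) :
    boundaryLogVariation (fun z => g (z.1, 0) - g (0, z.2)) ≠ 0 := by
  let hor : ℝ → ℝ × ℝ → ℝ × ℝ := fun s z => (z.1, 0) - ((1 + s) / 4) • z
  let ver : ℝ → ℝ × ℝ → ℝ × ℝ := fun s z => (0, z.2) - ((1 + s) / 4) • z
  have hcoeff {s : ℝ} (hs : s ∈ Icc (-1) 1) : (1 + s) / 4 ∈ Icc (0 : ℝ) 1 := by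
    constructor <;> linarith [hs.1, hs.2]
  have hor_mem : ∀ s ∈ Icc (-1 : ℝ) 1, ∀ z ∈ Metric.sphere 0 1, hor s z ∈ Icc (-1) 1 :=
    fun s hs z hz => (sub_smul_mem_square (mem_square_of_mem_sphere hz) (hcoeff hs)).1
  have ver_mem : ∀ s ∈ Icc (-1 : ℝ) 1, ∀ z ∈ Metric.sphere 0 1, ver s z ∈ Icc (-1) 1 :=
    fun s hs z hz => (sub_smul_mem_square (mem_square_of_mem_sphere hz) (hcoeff hs)).2
  have hcont : ContinuousOn (Function.uncurry fun s z => g (hor s z) - g (ver s z))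
      (Icc (-1) 1 ×ˢ Metric.sphere 0 1) :=
    (hg.comp (f := Function.uncurry hor) (by fun_prop) fun w hw => hor_mem _ hw.1 _ hw.2).sub
      (hg.comp (f := Function.uncurry ver) (by fun_prop) fun w hw => ver_mem _ hw.1 _ hw.2)
  have hne : ∀ s ∈ Icc (-1 : ℝ) 1, ∀ z ∈ Metric.sphere 0 1, g (hor s z) - g (ver s z) ≠ 0 := by
    intro s hs z hz h
    have heq := hinj (hor_mem s hs z hz) (ver_mem s hs z hz) (sub_eq_zero.1 h)
    have hz₀ : z = 0 := by simpa [hor, ver, Prod.ext_iff, eq_comm] using heq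
    simp [hz₀] at hz
  have hhom := boundaryLogVariation_eq_of_homotopy hcont hne
  have hstart : (fun z => g (hor (-1) z) - g (ver (-1) z)) = fun z => g (z.1, 0) - g (0, z.2) := by
    simp [hor, ver]
  rw [← hstart, hhom]
  have hmem₁ : (1 : ℝ) ∈ Icc (-1) 1 := by norm_num
  refine boundaryLogVariation_ne_zero_of_odd
    (hcont.comp (f := fun z => ((1 : ℝ), z)) (by fun_prop) fun z hz => ⟨hmem₁, hz⟩)
    (hne 1 hmem₁) fun z => ?_
  have hswap : hor 1 (-z) = ver 1 z ∧ ver 1 (-z) = hor 1 z := by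
    constructor <;> ext <;> simp [hor, ver] <;> ring
  rw [hswap.1, hswap.2, neg_sub]

theorem exists_continuous_of_joinedIn {X : Type*} [TopologicalSpace X] {s : Set X}
    {x y : X} (h : JoinedIn s x y) :
    ∃ c : ℝ → X, Continuous c ∧ c (-1) = x ∧ c 1 = y ∧ ∀ t, c t ∈ s := by
  obtain ⟨γ, hγ⟩ := h
  refine ⟨fun t => γ.extend ((t + 1) / 2), by fun_prop, by simp, by simp, fun t => ?_⟩
  exact hγ _

theorem mk_zero_mem_square {x : ℝ} (hx : x ∈ Icc (-1) 1) : (x, (0 : ℝ)) ∈ Icc (-1 : ℝ × ℝ) 1 := by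
  simpa [Prod.le_def] using hx

theorem zero_mk_mem_square {y : ℝ} (hy : y ∈ Icc (-1) 1) : ((0 : ℝ), y) ∈ Icc (-1 : ℝ × ℝ) 1 := by
  simpa [Prod.le_def] using hy

theorem not_disjoint_of_joinedIn_of_injOn_square {g : ℝ × ℝ → ℝ × ℝ}
    (hg : ContinuousOn g (Icc (-1) 1)) (hinj : InjOn g (Icc (-1) 1)) {A B : Set (ℝ × ℝ)}
    (hA : JoinedIn A (g (1, 0)) (g (-1, 0))) (hB : JoinedIn B (g (0, 1)) (g (0, -1)))
    (hgA : ∀ y ∈ Icc (-1) 1, g (0, y) ∉ A) (hgB : ∀ x ∈ Icc (-1) 1, g (x, 0) ∉ B) :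
    ¬Disjoint A B := by
  intro hAB
  obtain ⟨α, hα, hα₀, hα₁, hαA⟩ := exists_continuous_of_joinedIn hA
  obtain ⟨β, hβ, hβ₀, hβ₁, hβB⟩ := exists_continuous_of_joinedIn hB
  let e : ℝ × ℝ → ℂ := Complex.equivRealProdCLM.symm
  have he : Continuous e := Complex.equivRealProdCLM.symm.continuous
  have he_inj : Function.Injective e := Complex.equivRealProdCLM.symm.injective
  refine boundaryLogVariation_sub_ne_zero (he.comp_continuousOn hg) (he_inj.comp_injOn hinj)
    (boundaryLogVariation_sub_eq_zero (f := fun x => e (g (x, 0))) (k := fun y => e (g (0, y)))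
      (α := e ∘ α) (β := e ∘ β)
      (he.comp_continuousOn (hg.comp (by fun_prop) fun t => mk_zero_mem_square))
      (he.comp_continuousOn (hg.comp (by fun_prop) fun t => zero_mk_mem_square))
      (he.comp hα).continuousOn (he.comp hβ).continuousOn
      (congrArg e hα₀) (congrArg e hα₁) (congrArg e hβ₀) (congrArg e hβ₁) ?_ ?_ ?_)
  · exact fun s hs t _ h => hgB s hs (he_inj h ▸ hβB t)
  · exact fun s _ t ht h => hgA t ht (he_inj h ▸ hαA s)
  · exact fun s _ t _ h => disjoint_left.1 hAB (hαA s) (he_inj h ▸ hβB t)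

end LogVariation

/-! ### Crossing arcs -/

namespace Arc

open Set Topology

/-- The part of an arc between two parameters, given in either order. -/
def subarc (γ : Arc) (s t : ℝ) : Set (ℝ × ℝ) := γ.toFun '' uIcc s t

variable {γ : Arc} {r s t : ℝ}

theorem subarc_subset_img (hs : s ∈ Icc 0 1) (ht : t ∈ Icc 0 1) : γ.subarc s t ⊆ γ.img :=
  image_mono (uIcc_subset_Icc hs ht)

theorem mem_subarc_iff (hr : r ∈ Icc 0 1) (hs : s ∈ Icc 0 1) (ht : t ∈ Icc 0 1) :
    γ.toFun r ∈ γ.subarc s t ↔ r ∈ uIcc s t :=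
  γ.injOn.mem_image_iff (uIcc_subset_Icc hs ht) hr

theorem joinedIn_subarc (hs : s ∈ Icc 0 1) (ht : t ∈ Icc 0 1) :
    JoinedIn (γ.subarc s t) (γ.toFun s) (γ.toFun t) :=
  (((convex_uIcc s t).isPathConnected nonempty_uIcc).image'
    (γ.contOn.mono (uIcc_subset_Icc hs ht))).joinedIn _ (mem_image_of_mem _ left_mem_uIcc)
    _ (mem_image_of_mem _ right_mem_uIcc)

theorem eventually_mem_subarc (hs : s ∈ Icc 0 1) (ht : t ∈ Icc 0 1) (hr : r ∈ uIoo s t) :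
    ∀ᶠ z in 𝓝 (γ.toFun r), z ∈ γ.img → z ∈ γ.subarc s t := by
  have hcompact : IsCompact (γ.toFun '' (Icc 0 1 \ uIoo s t)) :=
    (isCompact_Icc.diff isOpen_Ioo).image_of_continuousOn (γ.contOn.mono sdiff_subset)
  have hr₁ : r ∈ Icc (0 : ℝ) 1 := uIcc_subset_Icc hs ht (uIoo_subset_uIcc_self hr)
  have hnotMem : γ.toFun r ∉ γ.toFun '' (Icc 0 1 \ uIoo s t) := fun h =>
    ((γ.injOn.mem_image_iff sdiff_subset hr₁).1 h).2 hr
  filter_upwards [hcompact.isClosed.isOpen_compl.mem_nhds hnotMem]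
  rintro _ hz ⟨u, hu, rfl⟩
  have hu' : u ∈ uIoo s t := by_contra fun h => hz (mem_image_of_mem _ ⟨hu, h⟩)
  exact mem_image_of_mem _ (uIoo_subset_uIcc_self hu')

theorem joinedIn_closedCurve_diff {K : Set (ℝ × ℝ)} (hs : s ∈ Icc 0 1) (ht : t ∈ Icc 0 1)
    (hr : r ∈ uIoo s t) (hK : JoinedIn K (γ.toFun s) (γ.toFun t)) (hrK : γ.toFun r ∉ K)
    {y z : ℝ × ℝ} (hy : y ∈ γ.subarc s t) (hyr : y ≠ γ.toFun r) (hz : z ∈ γ.subarc s t)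
    (hzr : z ≠ γ.toFun r) : JoinedIn ((γ.subarc s t ∪ K) \ {γ.toFun r}) y z := by
  have hr' := uIoo_subset_uIcc_self hr
  have hr₁ : r ∈ Icc (0 : ℝ) 1 := uIcc_subset_Icc hs ht hr'
  have hclosing : JoinedIn ((γ.subarc s t ∪ K) \ {γ.toFun r}) (γ.toFun s) (γ.toFun t) :=
    hK.mono fun w hw => ⟨Or.inr hw, fun h => hrK (h ▸ hw)⟩
  have sub_part {u v : ℝ} (hu : u ∈ uIcc s t) (hv : v ∈ uIcc s t) (hruv : r ∉ uIcc u v) :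
      JoinedIn ((γ.subarc s t ∪ K) \ {γ.toFun r}) (γ.toFun u) (γ.toFun v) := by
    have hu₁ := uIcc_subset_Icc hs ht hu
    have hv₁ := uIcc_subset_Icc hs ht hv
    refine (joinedIn_subarc hu₁ hv₁).mono fun w hw => ⟨Or.inl ?_, ?_⟩
    · exact image_mono (uIcc_subset_uIcc hu hv) hw
    · exact fun h => hruv ((mem_subarc_iff hr₁ hu₁ hv₁).1 (h ▸ hw))
  have to_start {y : ℝ × ℝ} (hy : y ∈ γ.subarc s t) (hyr : y ≠ γ.toFun r) :
      JoinedIn ((γ.subarc s t ∪ K) \ {γ.toFun r}) y (γ.toFun s) := by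
    obtain ⟨u, hu, rfl⟩ := hy
    have hur : u ≠ r := fun h => hyr (h ▸ rfl)
    rcases em (r ∈ uIcc u s) with h | h
    · refine (sub_part hu right_mem_uIcc fun h' => ?_).trans hclosing.symm
      grind [uIoo, mem_uIcc]
    · exact sub_part hu left_mem_uIcc h
  exact (to_start hy hyr).trans (to_start hz hzr).symm

end Arc

namespace CrossesProperlyAt

open Set Topology

variable {γ δ : Arc} {q : ℝ × ℝ}

theorem exists_square (h : CrossesProperlyAt γ δ q) {U : Set (ℝ × ℝ)} (hU : U ∈ 𝓝 q) :
    ∃ g : ℝ × ℝ → ℝ × ℝ, ContinuousOn g (Icc (-1) 1) ∧ InjOn g (Icc (-1) 1) ∧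
      MapsTo g (Icc (-1) 1) U ∧ g 0 = q ∧
      (∀ x ∈ Icc (-1) 1, g (x, 0) ∈ γ.img) ∧ ∀ y ∈ Icc (-1) 1, g (0, y) ∈ δ.img := by
  obtain ⟨-, -, φ, hq, htarget, hφq, hγ, hδ⟩ := h
  have hball : Metric.ball 0 1 ∈ 𝓝 (0 : ℝ × ℝ) := Metric.ball_mem_nhds _ one_pos
  have hφ₀ : φ.symm 0 = q := hφq ▸ φ.left_inv hq
  have hcont : ContinuousOn φ.symm (Metric.ball 0 1) := htarget ▸ φ.continuousOn_symm
  have hpre : φ.symm ⁻¹' U ∩ Metric.ball 0 1 ∈ 𝓝 (0 : ℝ × ℝ) :=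
    Filter.inter_mem ((hcont.continuousAt hball).preimage_mem_nhds (hφ₀.symm ▸ hU)) hball
  obtain ⟨ε, hε, hεU⟩ := Metric.nhds_basis_closedBall.mem_iff.1 hpre
  have hscale {z : ℝ × ℝ} (hz : z ∈ Icc (-1) 1) : ε • z ∈ Metric.closedBall (0 : ℝ × ℝ) ε := by
    have hz₁ : ‖z‖ ≤ 1 := max_le (abs_le.2 ⟨hz.1.1, hz.2.1⟩) (abs_le.2 ⟨hz.1.2, hz.2.2⟩)
    rw [mem_closedBall_zero_iff, norm_smul, Real.norm_of_nonneg hε.le]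
    exact mul_le_of_le_one_right hε.le hz₁
  have hpull {η : Arc} {z : ℝ × ℝ} (hz : z ∈ φ '' (φ.source ∩ η.img)) : φ.symm z ∈ η.img := by
    obtain ⟨w, hw, rfl⟩ := hz
    exact (φ.left_inv hw.1).symm ▸ hw.2
  refine ⟨fun z => φ.symm (ε • z), hcont.comp (by fun_prop) fun z hz => (hεU (hscale hz)).2, ?_,
    fun z hz => (hεU (hscale hz)).1, by simpa using hφ₀, fun x hx => hpull ?_, fun y hy => hpull ?_⟩
  · intro z hz w hw heq
    have hsymm : InjOn φ.symm (Metric.ball 0 1) := htarget ▸ φ.symm.injOn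
    exact smul_right_injective _ hε.ne' (hsymm (hεU (hscale hz)).2 (hεU (hscale hw)).2 heq)
  · rw [hγ]
    exact ⟨(hεU (hscale (mk_zero_mem_square hx))).2, by simp⟩
  · rw [hδ]
    exact ⟨(hεU (hscale (zero_mk_mem_square hy))).2, by simp⟩

theorem exists_square_subarc (h : CrossesProperlyAt γ δ q) {t₀ t₁ t₂ s₀ s₁ s₂ : ℝ}
    (ht₁ : t₁ ∈ Icc 0 1) (ht₂ : t₂ ∈ Icc 0 1) (hs₁ : s₁ ∈ Icc 0 1) (hs₂ : s₂ ∈ Icc 0 1)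
    (ht₀ : t₀ ∈ uIoo t₁ t₂) (hs₀ : s₀ ∈ uIoo s₁ s₂) (hγq : γ.toFun t₀ = q) (hδq : δ.toFun s₀ = q) :
    ∃ g : ℝ × ℝ → ℝ × ℝ, ContinuousOn g (Icc (-1) 1) ∧ InjOn g (Icc (-1) 1) ∧ g 0 = q ∧
      (∀ x ∈ Icc (-1) 1, g (x, 0) ∈ γ.subarc t₁ t₂) ∧
      ∀ y ∈ Icc (-1) 1, g (0, y) ∈ δ.subarc s₁ s₂ := by
  have hlocal : ∀ᶠ z in 𝓝 q,
      (z ∈ γ.img → z ∈ γ.subarc t₁ t₂) ∧ (z ∈ δ.img → z ∈ δ.subarc s₁ s₂) :=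
    (hγq ▸ Arc.eventually_mem_subarc ht₁ ht₂ ht₀).and (hδq ▸ Arc.eventually_mem_subarc hs₁ hs₂ hs₀)
  obtain ⟨g, hg, hinj, hgU, hg₀, hgγ, hgδ⟩ := h.exists_square hlocal
  exact ⟨g, hg, hinj, hg₀, fun x hx => (hgU (mk_zero_mem_square hx)).1 (hgγ x hx),
    fun y hy => (hgU (zero_mk_mem_square hy)).2 (hgδ y hy)⟩

theorem not_disjoint_of_joinedIn (h : CrossesProperlyAt γ δ q) (hq : γ.img ∩ δ.img = {q})
    {t₀ t₁ t₂ s₀ s₁ s₂ : ℝ} (ht₁ : t₁ ∈ Icc 0 1) (ht₂ : t₂ ∈ Icc 0 1) (hs₁ : s₁ ∈ Icc 0 1)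
    (hs₂ : s₂ ∈ Icc 0 1) (ht₀ : t₀ ∈ uIoo t₁ t₂) (hs₀ : s₀ ∈ uIoo s₁ s₂)
    (hγq : γ.toFun t₀ = q) (hδq : δ.toFun s₀ = q) {K K' : Set (ℝ × ℝ)}
    (hK : JoinedIn K (γ.toFun t₁) (γ.toFun t₂)) (hK' : JoinedIn K' (δ.toFun s₁) (δ.toFun s₂))
    (hKδ : Disjoint K (δ.subarc s₁ s₂)) (hK'γ : Disjoint K' (γ.subarc t₁ t₂)) :
    ¬Disjoint K K' := by
  intro hKK'
  have hqK : q ∉ K := fun hqK => disjoint_left.1 hKδ hqK ⟨s₀, uIoo_subset_uIcc_self hs₀, hδq⟩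
  have hqK' : q ∉ K' := fun hqK' => disjoint_left.1 hK'γ hqK' ⟨t₀, uIoo_subset_uIcc_self ht₀, hγq⟩
  obtain ⟨g, hg, hinj, hg₀, hor, ver⟩ :=
    h.exists_square_subarc ht₁ ht₂ hs₁ hs₂ ht₀ hs₀ hγq hδq
  have ne_q {z : ℝ × ℝ} (hz : z ∈ Icc (-1) 1) (hz₀ : z ≠ 0) : g z ≠ q := fun hzq =>
    hz₀ (hinj hz (by norm_num) (hzq.trans hg₀.symm))
  have one_mem : (1 : ℝ) ∈ Icc (-1) 1 := by norm_num
  have neg_one_mem : (-1 : ℝ) ∈ Icc (-1) 1 := by norm_num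
  have hA : JoinedIn ((γ.subarc t₁ t₂ ∪ K) \ {q}) (g (1, 0)) (g (-1, 0)) := by
    rw [← hγq] at ne_q hqK ⊢
    exact Arc.joinedIn_closedCurve_diff ht₁ ht₂ ht₀ hK hqK (hor 1 one_mem)
      (ne_q (mk_zero_mem_square one_mem) (by simp)) (hor (-1) neg_one_mem)
      (ne_q (mk_zero_mem_square neg_one_mem) (by simp))
  have hB : JoinedIn ((δ.subarc s₁ s₂ ∪ K') \ {q}) (g (0, 1)) (g (0, -1)) := by
    rw [← hδq] at ne_q hqK' ⊢
    exact Arc.joinedIn_closedCurve_diff hs₁ hs₂ hs₀ hK' hqK' (ver 1 one_mem)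
      (ne_q (zero_mk_mem_square one_mem) (by simp)) (ver (-1) neg_one_mem)
      (ne_q (zero_mk_mem_square neg_one_mem) (by simp))
  have hAB : Disjoint ((γ.subarc t₁ t₂ ∪ K) \ {q}) (δ.subarc s₁ s₂ ∪ K') := by
    have hsub : Disjoint (γ.subarc t₁ t₂ \ {q}) (δ.subarc s₁ s₂) := disjoint_left.2 fun z hz hz' =>
      hz.2 (hq ▸ ⟨Arc.subarc_subset_img ht₁ ht₂ hz.1, Arc.subarc_subset_img hs₁ hs₂ hz'⟩)
    rw [union_sdiff_distrib, disjoint_union_left, disjoint_union_right, disjoint_union_right]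
    exact ⟨⟨hsub, hK'γ.symm.mono_left sdiff_subset⟩, hKδ.mono_left sdiff_subset,
      hKK'.mono_left sdiff_subset⟩
  exact not_disjoint_of_joinedIn_of_injOn_square hg hinj hA hB
    (fun y hy hyA => disjoint_left.1 hAB hyA (Or.inl (ver y hy)))
    (fun x hx hxB => disjoint_left.1 hAB ⟨Or.inl (hor x hx), hxB.2⟩ hxB.1)
    (hAB.mono_right sdiff_subset)

end CrossesProperlyAt

/-! ### Crossings along a string -/

namespace OneStringRep

open Set

variable {V : Type} {G : SimpleGraph V} (R : OneStringRep G) {a b c d u v w x y z : V}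

/-- The parameter at which the string of `v` meets the string of `w`, with the junk value `0` if
the two strings are disjoint. For adjacent vertices the infimum is over a singleton. -/
noncomputable def param (v w : V) : ℝ := sInf {t ∈ Icc 0 1 | (R.γ v).toFun t ∈ (R.γ w).img}

/-- The common point of the strings of two adjacent vertices. -/
noncomputable def crossing (v w : V) : ℝ × ℝ := (R.γ v).toFun (R.param v w)

/-- On the string of `v`, the string of `b` is met strictly between those of `a` and `c`, whichever
of the two comes first. -/
def Between (v a b c : V) : Prop := R.param v b ∈ uIoo (R.param v a) (R.param v c)

/-- The part of the string of `v` between its crossings with the strings of `a` and `c`. -/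
def turn (v a c : V) : Set (ℝ × ℝ) := (R.γ v).subarc (R.param v a) (R.param v c)

variable {R}

theorem between_iff : R.Between v a b c ↔
    R.param v a < R.param v b ∧ R.param v b < R.param v c ∨
      R.param v c < R.param v b ∧ R.param v b < R.param v a := by
  grind [Between, uIoo]

theorem Between.symm (h : R.Between v a b c) : R.Between v c b a := by
  rwa [Between, uIoo_comm] at h

theorem exists_sep_eq_singleton (h : G.Adj v w) :
    ∃ t, {t ∈ Icc 0 1 | (R.γ v).toFun t ∈ (R.γ w).img} = {t} := by
  obtain ⟨q, hq⟩ := R.adj_inter v w h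
  obtain ⟨⟨t, ht, rfl⟩, hqw⟩ : q ∈ (R.γ v).img ∩ (R.γ w).img := hq ▸ mem_singleton q
  refine ⟨t, eq_singleton_iff_unique_mem.2 ⟨⟨ht, hqw⟩, fun s hs => (R.γ v).injOn hs.1 ht ?_⟩⟩
  exact hq.subset ⟨mem_image_of_mem _ hs.1, hs.2⟩

theorem sep_eq_singleton_param (h : G.Adj v w) :
    {t ∈ Icc 0 1 | (R.γ v).toFun t ∈ (R.γ w).img} = {R.param v w} := by
  obtain ⟨t, ht⟩ := R.exists_sep_eq_singleton h
  rw [param, ht, csInf_singleton]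

theorem param_mem_Icc : R.param v w ∈ Icc 0 1 := by
  rcases eq_empty_or_nonempty {t ∈ Icc 0 1 | (R.γ v).toFun t ∈ (R.γ w).img} with h | h
  · rw [param, h, Real.sInf_empty]
    exact left_mem_Icc.2 zero_le_one
  · exact ⟨Real.sInf_nonneg fun t ht => ht.1.1,
      csInf_le_of_le ⟨0, fun t ht => ht.1.1⟩ h.some_mem h.some_mem.1.2⟩

theorem eq_param (h : G.Adj v w) {t : ℝ} (ht : t ∈ Icc 0 1) (htw : (R.γ v).toFun t ∈ (R.γ w).img) :
    t = R.param v w :=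
  (sep_eq_singleton_param h).subset ⟨ht, htw⟩

theorem crossing_mem_img : R.crossing v w ∈ (R.γ v).img :=
  mem_image_of_mem _ param_mem_Icc

theorem crossing_mem_img_right (h : G.Adj v w) : R.crossing v w ∈ (R.γ w).img :=
  ((sep_eq_singleton_param h).superset rfl).2

theorem img_inter_img (h : G.Adj v w) : (R.γ v).img ∩ (R.γ w).img = {R.crossing v w} := by
  obtain ⟨q, hq⟩ := R.adj_inter v w h
  have hmem : R.crossing v w ∈ ({q} : Set (ℝ × ℝ)) :=
    hq ▸ ⟨crossing_mem_img, crossing_mem_img_right h⟩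
  rw [hq, hmem]

theorem crossing_comm (h : G.Adj v w) : R.crossing v w = R.crossing w v := by
  rw [← singleton_eq_singleton_iff, ← img_inter_img h, ← img_inter_img h.symm, inter_comm]

theorem param_ne (hu : G.Adj b u) (hv : G.Adj b v) (huv : u ≠ v) : R.param b u ≠ R.param b v := by
  intro heq
  have hcross : R.crossing b u = R.crossing b v := congrArg (R.γ b).toFun heq
  exact (R.no_triple b u v hu.ne hv.ne huv).subset
    ⟨⟨crossing_mem_img, crossing_mem_img_right hu⟩, hcross ▸ crossing_mem_img_right hv⟩

theorem turn_subset_img : R.turn v a c ⊆ (R.γ v).img :=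
  Arc.subarc_subset_img param_mem_Icc param_mem_Icc

theorem disjoint_turn (h : Gᶜ.Adj u v) : Disjoint (R.turn u a b) (R.turn v c d) := by
  have himg := disjoint_iff_inter_eq_empty.2 (R.nonadj_disjoint u v h.1 h.2)
  exact himg.mono turn_subset_img turn_subset_img

theorem disjoint_turn_of_not_between (hv : G.Adj u v) (ha : G.Adj u a) (hb : G.Adj u b)
    (hva : v ≠ a) (hvb : v ≠ b) (h : ¬R.Between u a v b) :
    Disjoint (R.turn u a b) (R.turn v c d) := by
  rw [disjoint_left]
  intro z hz hz'
  have hzcross : z = R.crossing u v :=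
    (img_inter_img hv).subset ⟨turn_subset_img hz, turn_subset_img hz'⟩
  have huIcc : R.param u v ∈ uIcc (R.param u a) (R.param u b) :=
    (Arc.mem_subarc_iff param_mem_Icc param_mem_Icc param_mem_Icc).1 (hzcross ▸ hz)
  have hua : R.param u v ≠ R.param u a := param_ne hv ha hva
  have hub : R.param u v ≠ R.param u b := param_ne hv hb hvb
  grind [between_iff, mem_uIcc]

theorem disjoint_turn_self
    (h : Disjoint (uIcc (R.param v a) (R.param v b)) (uIcc (R.param v c) (R.param v d))) :
    Disjoint (R.turn v a b) (R.turn v c d) :=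
  h.image (R.γ v).injOn (uIcc_subset_Icc param_mem_Icc param_mem_Icc)
    (uIcc_subset_Icc param_mem_Icc param_mem_Icc)

theorem joinedIn_turn : JoinedIn (R.turn v a c) (R.crossing v a) (R.crossing v c) :=
  Arc.joinedIn_subarc param_mem_Icc param_mem_Icc

theorem joinedIn_turn_union (hbv : G.Adj b v) (hvw : G.Adj v w) (hwd : G.Adj w d) :
    JoinedIn (R.turn v b w ∪ R.turn w v d) (R.crossing b v) (R.crossing d w) := by
  rw [crossing_comm hbv, crossing_comm hwd.symm]
  refine (joinedIn_turn.mono subset_union_left).trans ?_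
  rw [crossing_comm hvw]
  exact joinedIn_turn.mono subset_union_right

theorem joinedIn_turn_union_union (hbu : G.Adj b u) (huv : G.Adj u v) (hvw : G.Adj v w)
    (hwd : G.Adj w d) :
    JoinedIn (R.turn u b v ∪ R.turn v u w ∪ R.turn w v d) (R.crossing b u) (R.crossing d w) := by
  refine ((joinedIn_turn_union hbu huv hvw).mono subset_union_left).trans ?_
  rw [crossing_comm hwd.symm]
  exact joinedIn_turn.mono subset_union_right

theorem not_disjoint_of_joinedIn (h : G.Adj b x) (hb : R.Between b u x v)
    (hx : R.Between x y b z) {K K' : Set (ℝ × ℝ)}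
    (hK : JoinedIn K (R.crossing b u) (R.crossing b v))
    (hK' : JoinedIn K' (R.crossing x y) (R.crossing x z))
    (hKx : Disjoint K (R.turn x y z)) (hK'b : Disjoint K' (R.turn b u v)) : ¬Disjoint K K' :=
  CrossesProperlyAt.not_disjoint_of_joinedIn
    (R.proper b x h.ne _ ⟨crossing_mem_img, crossing_mem_img_right h⟩) (img_inter_img h)
    param_mem_Icc param_mem_Icc param_mem_Icc param_mem_Icc hb hx rfl (crossing_comm h).symm
    hK hK' hKx hK'b

/-- The order in which the string of a vertex `b` meets the strings of its neighbours is compatible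
with the edges in the link of `b`: no two disjoint edges between neighbours of `b` cross when
these are placed on a line in that order. -/
def HasNoncrossingLinks (R : OneStringRep G) : Prop :=
  ∀ ⦃b u v w w' : V⦄, G.Adj b u → G.Adj b v → G.Adj b w → G.Adj b w' → G.Adj u v → G.Adj w w' →
    u ≠ w → u ≠ w' → v ≠ w → v ≠ w' → R.Between b u w v → R.Between b u w' v

end OneStringRep

/-! ### Gaps between rim vertices of a bipyramid -/

/-- Around the edge `A B` of the rim of a bipyramid with poles `s` and `s'`: the poles are adjacent
to each other and to the path `L A B Q`, and the apex `x` is adjacent to the triangle `s A B`.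
No two of `L`, `A`, `B`, `Q`, `x`, `s'` are adjacent unless listed. -/
structure GapConfig {V : Type} (G : SimpleGraph V) (s s' L A B Q x : V) : Prop where
  ss' : G.Adj s s'
  sL : G.Adj s L
  sA : G.Adj s A
  sB : G.Adj s B
  sQ : G.Adj s Q
  sx : G.Adj s x
  s'L : G.Adj s' L
  s'A : G.Adj s' A
  s'B : G.Adj s' B
  s'Q : G.Adj s' Q
  LA : G.Adj L A
  AB : G.Adj A B
  BQ : G.Adj B Q
  Ax : G.Adj A x
  Bx : G.Adj B x
  LB : Gᶜ.Adj L B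
  LQ : Gᶜ.Adj L Q
  AQ : Gᶜ.Adj A Q
  Lx : Gᶜ.Adj L x
  Qx : Gᶜ.Adj Q x
  s'x : Gᶜ.Adj s' x

theorem GapConfig.swap {V : Type} {G : SimpleGraph V} {s s' L A B Q x : V}
    (h : GapConfig G s s' L A B Q x) : GapConfig G s s' Q B A L x :=
  ⟨h.ss', h.sQ, h.sB, h.sA, h.sL, h.sx, h.s'Q, h.s'B, h.s'A, h.s'L, h.BQ.symm, h.AB.symm,
    h.LA.symm, h.Bx, h.Ax, h.AQ.symm, h.LQ.symm, h.LB.symm, h.Qx, h.Lx, h.s'x⟩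

namespace OneStringRep

open Set

variable {V : Type} {G : SimpleGraph V} {R : OneStringRep G} {s s' a c L A B Q x : V}

/-- A gap configuration in which the other pole `s'` interferes as little as possible: `s` meets
`L`, `A`, `x`, `B`, `Q` in this order, and the turns joining `s` to `B` around `A` and to `A`
around `B` meet the apex `x`, but neither the rest of the rim path nor `s'`. -/
structure UncutGap (R : OneStringRep G) (s s' L A B Q x : V) : Prop
    extends GapConfig G s s' L A B Q x where
  s_LAx : R.Between s L A x
  s_AxB : R.Between s A x B
  s_xBQ : R.Between s x B Q
  s_As'B : ¬R.Between s A s' B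
  A_sxB : R.Between A s x B
  A_sLB : ¬R.Between A s L B
  A_ss'B : ¬R.Between A s s' B
  B_sxA : R.Between B s x A
  B_sQA : ¬R.Between B s Q A
  B_ss'A : ¬R.Between B s s' A

namespace UncutGap

theorem swap (h : R.UncutGap s s' L A B Q x) : R.UncutGap s s' Q B A L x where
  toGapConfig := h.toGapConfig.swap
  s_LAx := h.s_xBQ.symm
  s_AxB := h.s_AxB.symm
  s_xBQ := h.s_LAx.symm
  s_As'B := fun hs' => h.s_As'B hs'.symm
  A_sxB := h.B_sxA
  A_sLB := h.B_sQA
  A_ss'B := h.B_ss'A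
  B_sxA := h.A_sxB
  B_sQA := h.A_sLB
  B_ss'A := h.A_ss'B

theorem disjoint_polePath_rimPath (h : R.UncutGap s s' L A B Q x) :
    Disjoint (R.turn L s s' ∪ R.turn s' L Q ∪ R.turn Q s' s) (R.turn A x B ∪ R.turn B A x) := by
  simp only [disjoint_union_left, disjoint_union_right]
  refine ⟨⟨⟨?_, ?_⟩, disjoint_turn h.AQ.symm⟩, ⟨disjoint_turn h.LB, ?_⟩, ?_⟩
  · refine (disjoint_turn_of_not_between h.LA.symm h.Ax h.AB h.Lx.1 h.LB.1 ?_).symm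
    grind [between_iff, h.A_sxB, h.A_sLB]
  · refine (disjoint_turn_of_not_between h.s'A.symm h.Ax h.AB h.s'x.1 h.s'B.ne ?_).symm
    grind [between_iff, h.A_sxB, h.A_ss'B]
  · refine (disjoint_turn_of_not_between h.s'B.symm h.AB.symm h.Bx h.s'A.ne h.s'x.1 ?_).symm
    grind [between_iff, h.B_sxA, h.B_ss'A]
  · refine (disjoint_turn_of_not_between h.BQ h.AB.symm h.Bx h.AQ.1.symm h.Qx.1 ?_).symm
    grind [between_iff, h.B_sxA, h.B_sQA]

theorem disjoint_rimPath_pole (h : R.UncutGap s s' L A B Q x) :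
    Disjoint (R.turn A x B ∪ R.turn B A x) (R.turn s L Q) := by
  refine disjoint_union_left.2 ⟨?_, ?_⟩
  · refine disjoint_turn_of_not_between h.sA.symm h.Ax h.AB h.sx.ne h.sB.ne ?_
    grind [between_iff, h.A_sxB]
  · refine disjoint_turn_of_not_between h.sB.symm h.AB.symm h.Bx h.sA.ne h.sx.ne ?_
    grind [between_iff, h.B_sxA]

theorem not_between_apex_pole (h : R.UncutGap s s' L A B Q x) : ¬R.Between x A s B := by
  intro hx
  have hs : R.Between s L x Q := by grind [between_iff, h.s_LAx, h.s_AxB, h.s_xBQ]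
  refine not_disjoint_of_joinedIn h.sx hs hx
    (joinedIn_turn_union_union h.sL h.s'L.symm h.s'Q h.sQ.symm)
    (joinedIn_turn_union h.Ax.symm h.AB h.Bx) ?_ h.disjoint_rimPath_pole h.disjoint_polePath_rimPath
  exact disjoint_union_left.2 ⟨disjoint_union_left.2 ⟨disjoint_turn h.Lx, disjoint_turn h.s'x⟩,
    disjoint_turn h.Qx⟩

theorem disjoint_polePath_rim (h : R.UncutGap s s' L A B Q x) :
    Disjoint (R.turn s x B ∪ R.turn B s x) (R.turn A a c) := by
  refine disjoint_union_left.2 ⟨?_, ?_⟩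
  · refine disjoint_turn_of_not_between h.sA h.sx h.sB h.Ax.ne h.AB.ne ?_
    grind [between_iff, h.s_AxB]
  · refine disjoint_turn_of_not_between h.AB.symm h.sB.symm h.Bx h.sA.ne' h.Ax.ne ?_
    grind [between_iff, h.B_sxA]

theorem disjoint_turn_otherPole (h : R.UncutGap s s' L A B Q x) :
    Disjoint (R.turn s' a c) (R.turn s x B ∪ R.turn B s x) := by
  refine disjoint_union_right.2 ⟨?_, ?_⟩
  · refine (disjoint_turn_of_not_between h.ss' h.sx h.sB h.s'x.1 h.s'B.ne ?_).symm
    grind [between_iff, h.s_AxB, h.s_As'B]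
  · refine (disjoint_turn_of_not_between h.s'B.symm h.sB.symm h.Bx h.ss'.ne' h.s'x.1 ?_).symm
    grind [between_iff, h.B_sxA, h.B_ss'A]

theorem disjoint_turn_L_pole (h : R.UncutGap s s' L A B Q x) :
    Disjoint (R.turn L a c) (R.turn s x B) := by
  refine (disjoint_turn_of_not_between h.sL h.sx h.sB h.Lx.1 h.LB.1 ?_).symm
  grind [between_iff, h.s_LAx, h.s_AxB]

theorem not_between_pole_apex_L (h : R.UncutGap s s' L A B Q x) (hx : R.Between x s A B) :
    ¬R.Between A s x L := by
  intro hA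
  refine not_disjoint_of_joinedIn h.Ax hA hx (joinedIn_turn_union h.sA.symm h.sL h.LA)
    (joinedIn_turn_union h.sx.symm h.sB h.Bx) ?_ h.disjoint_polePath_rim ?_
  · refine disjoint_union_left.2 ⟨disjoint_turn_of_not_between h.sx h.sA h.sL h.Ax.ne'
      h.Lx.1.symm ?_, disjoint_turn h.Lx⟩
    grind [between_iff, h.s_LAx]
  · simp only [disjoint_union_left, disjoint_union_right]
    refine ⟨⟨disjoint_turn_self ?_, h.disjoint_turn_L_pole⟩, ?_, disjoint_turn h.LB⟩
    · rw [disjoint_left]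
      grind [between_iff, mem_uIcc, h.s_LAx, h.s_AxB]
    · refine disjoint_turn_of_not_between h.sB h.sA h.sL h.AB.ne' h.LB.1.symm ?_
      grind [between_iff, h.s_LAx, h.s_AxB]

theorem not_between_L_apex_otherPole (h : R.UncutGap s s' L A B Q x) (hx : R.Between x s A B) :
    ¬R.Between A L x s' := by
  intro hA
  refine not_disjoint_of_joinedIn h.Ax hA hx (joinedIn_turn_union h.LA.symm h.s'L.symm h.s'A)
    (joinedIn_turn_union h.sx.symm h.sB h.Bx) ?_ h.disjoint_polePath_rim ?_
  · exact disjoint_union_left.2 ⟨disjoint_turn h.Lx, disjoint_turn h.s'x⟩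
  · exact disjoint_union_left.2 ⟨disjoint_union_right.2 ⟨h.disjoint_turn_L_pole,
      disjoint_turn h.LB⟩, h.disjoint_turn_otherPole⟩

theorem not_between_B_apex_otherPole (h : R.UncutGap s s' L A B Q x) (hx : R.Between x s A B)
    (hB : ¬R.Between B s' s A) : ¬R.Between A B x s' := by
  intro hA
  have hBs' : R.param B s ≠ R.param B s' := param_ne h.sB.symm h.s'B.symm h.ss'.ne
  refine not_disjoint_of_joinedIn h.Ax hA hx (joinedIn_turn_union h.AB h.s'B.symm h.s'A)
    (joinedIn_turn_union h.sx.symm h.sB h.Bx) ?_ h.disjoint_polePath_rim ?_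
  · refine disjoint_union_left.2 ⟨disjoint_turn_of_not_between h.Bx h.AB.symm h.s'B.symm h.Ax.ne'
      h.s'x.1.symm ?_, disjoint_turn h.s'x⟩
    grind [between_iff, h.B_sxA, h.B_ss'A]
  · rw [disjoint_union_left, disjoint_union_right]
    refine ⟨⟨disjoint_turn_of_not_between h.sB.symm h.AB.symm h.s'B.symm h.sA.ne h.ss'.ne ?_,
      disjoint_turn_self ?_⟩, h.disjoint_turn_otherPole⟩
    · grind [between_iff]
    · rw [disjoint_left]
      grind [between_iff, mem_uIcc, h.B_sxA, h.B_ss'A]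

end UncutGap
end OneStringRep

namespace OneStringRep

variable {V : Type} {G : SimpleGraph V} {R : OneStringRep G} {b s s' L A B Q x : V}

theorem HasNoncrossingLinks.between_iff_between (hR : R.HasNoncrossingLinks) {u v w w' : V}
    (hu : G.Adj b u) (hv : G.Adj b v) (hw : G.Adj b w) (hw' : G.Adj b w') (huv : G.Adj u v)
    (hww' : G.Adj w w') (huw : u ≠ w) (huw' : u ≠ w') (hvw : v ≠ w) (hvw' : v ≠ w') :
    R.Between b u w v ↔ R.Between b u w' v :=
  ⟨hR hu hv hw hw' huv hww' huw huw' hvw hvw', hR hu hv hw' hw huv hww'.symm huw' huw hvw' hvw⟩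

theorem UncutGap.between_otherPole_of_between_apex (h : R.UncutGap s s' L A B Q x)
    (hR : R.HasNoncrossingLinks) (hx : R.Between x s A B) :
    R.Between A s' L B ∧ R.Between B s' Q A := by
  have hsx := h.not_between_pole_apex_L hx
  have hLx := h.not_between_L_apex_otherPole hx
  have hALx : R.param A L ≠ R.param A x := param_ne h.LA.symm h.Ax h.Lx.1
  have hAs' : R.param A s' ≠ R.param A s := param_ne h.s'A.symm h.sA.symm h.ss'.ne'
  have hAs : R.Between A s' s B := by grind [between_iff, h.A_sxB, h.A_sLB, h.A_ss'B]
  have hABx : R.Between A B x s' := by grind [between_iff, h.A_sxB]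
  have hBs : R.Between B s' s A := by_contra fun hB => h.not_between_B_apex_otherPole hx hB hABx
  exact ⟨hR h.s'A.symm h.AB h.sA.symm h.LA.symm h.s'B h.sL h.ss'.ne' h.s'L.ne h.sB.ne' h.LB.1.symm
      hAs,
    hR h.s'B.symm h.AB.symm h.sB.symm h.BQ h.s'A h.sQ h.ss'.ne' h.s'Q.ne h.sA.ne' h.AQ.1 hBs⟩

theorem UncutGap.between_otherPole (h : R.UncutGap s s' L A B Q x) (hR : R.HasNoncrossingLinks) :
    R.Between A s' L B ∧ R.Between B s' Q A := by
  have hsA : R.param x s ≠ R.param x A := param_ne h.sx.symm h.Ax.symm h.sA.ne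
  have hsB : R.param x s ≠ R.param x B := param_ne h.sx.symm h.Bx.symm h.sB.ne
  have hAB : R.param x A ≠ R.param x B := param_ne h.Ax.symm h.Bx.symm h.AB.ne
  have hmiddle : R.Between x A s B ∨ R.Between x s A B ∨ R.Between x s B A := by grind [between_iff]
  rcases hmiddle with hx | hx | hx
  · exact absurd hx h.not_between_apex_pole
  · exact h.between_otherPole_of_between_apex hR hx
  · exact (h.swap.between_otherPole_of_between_apex hR hx).symm

/-- On the string of `s`, the string of `s'` is met in none of the gaps between `L` and `A`, between
`A` and `B`, and between `B` and `Q`. -/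
def AvoidsGaps (R : OneStringRep G) (s s' L A B Q : V) : Prop :=
  ¬R.Between s L s' A ∧ ¬R.Between s A s' B ∧ ¬R.Between s B s' Q

end OneStringRep

namespace GapConfig

open OneStringRep

variable {V : Type} {G : SimpleGraph V} {R : OneStringRep G} {u v s s' L A B Q x y : V}

theorem between_rim_iff (h : GapConfig G s s' L A B Q x) (hR : R.HasNoncrossingLinks) :
    R.Between A s L B ↔ R.Between A s s' B :=
  hR.between_iff_between h.sA.symm h.AB h.LA.symm h.s'A.symm h.sB h.s'L.symm h.sL.ne h.ss'.ne
    h.LB.1.symm h.s'B.ne'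

theorem between_rim_iff' (h : GapConfig G s s' L A B Q x) (hR : R.HasNoncrossingLinks) :
    R.Between A s' L B ↔ R.Between A s' s B :=
  hR.between_iff_between h.s'A.symm h.AB h.LA.symm h.sA.symm h.s'B h.sL.symm h.s'L.ne h.ss'.ne'
    h.LB.1.symm h.sB.ne'

theorem between_apex (h : GapConfig G s s' L A B Q x) (hR : R.HasNoncrossingLinks)
    (hA : ¬R.Between A s L B) : R.Between A s x B := by
  have hBs' := hR.between_iff_between h.sA.symm h.Ax h.AB h.s'A.symm h.sx h.s'B.symm h.sB.ne
    h.ss'.ne h.Bx.ne' h.s'x.1.symm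
  have hss' := hR.between_iff_between h.Ax h.AB h.sA.symm h.s'A.symm h.Bx.symm h.ss' h.sx.ne'
    h.s'x.1.symm h.sB.ne' h.s'B.ne'
  have hxs : R.param A x ≠ R.param A s := param_ne h.Ax h.sA.symm h.sx.ne'
  have hxB : R.param A x ≠ R.param A B := param_ne h.Ax h.AB h.Bx.ne'
  have hsB : R.param A s ≠ R.param A B := param_ne h.sA.symm h.AB h.sB.ne
  have hs's : R.param A s' ≠ R.param A s := param_ne h.s'A.symm h.sA.symm h.ss'.ne'
  have hs'B : R.param A s' ≠ R.param A B := param_ne h.s'A.symm h.AB h.s'B.ne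
  have hs'x : R.param A s' ≠ R.param A x := param_ne h.s'A.symm h.Ax h.s'x.1
  rw [h.between_rim_iff hR] at hA
  grind [between_iff]

theorem between_rimPath (h : GapConfig G s s' L A B Q x) (hR : R.HasNoncrossingLinks)
    (hs : R.AvoidsGaps s s' L A B Q) : R.Between s L A B ∧ R.Between s A B Q := by
  obtain ⟨hLA, hAB, hBQ⟩ := hs
  have hLA_B := hR.between_iff_between h.sL h.sA h.sB h.ss' h.LA h.s'B.symm h.LB.1 h.s'L.ne' h.AB.ne
    h.s'A.ne'
  have hAB_L := hR.between_iff_between h.sA h.sB h.sL h.ss' h.AB h.s'L.symm h.LA.ne' h.s'A.ne'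
    h.LB.1.symm h.s'B.ne'
  have hAB_Q := hR.between_iff_between h.sA h.sB h.sQ h.ss' h.AB h.s'Q.symm h.AQ.1 h.s'A.ne' h.BQ.ne
    h.s'B.ne'
  have hBQ_A := hR.between_iff_between h.sB h.sQ h.sA h.ss' h.BQ h.s'A.symm h.AB.ne' h.s'B.ne'
    h.AQ.1.symm h.s'Q.ne'
  have hneAB : R.param s A ≠ R.param s B := param_ne h.sA h.sB h.AB.ne
  have hneLA : R.param s L ≠ R.param s A := param_ne h.sL h.sA h.LA.ne
  have hneBQ : R.param s B ≠ R.param s Q := param_ne h.sB h.sQ h.BQ.ne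
  have hneLB : R.param s L ≠ R.param s B := param_ne h.sL h.sB h.LB.1
  have hneAQ : R.param s A ≠ R.param s Q := param_ne h.sA h.sQ h.AQ.1
  rw [← hLA_B] at hLA
  rw [← hBQ_A] at hBQ
  have hL := hAB_L.not.2 hAB
  have hQ := hAB_Q.not.2 hAB
  clear hLA_B hAB_L hAB_Q hBQ_A hAB
  constructor <;> grind [between_iff]

theorem between_apex_pole (h : GapConfig G s s' L A B Q x) (hR : R.HasNoncrossingLinks)
    (hs : R.AvoidsGaps s s' L A B Q) : R.Between s A x B := by
  obtain ⟨hLAB, hABQ⟩ := h.between_rimPath hR hs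
  have hAx := (hR.between_iff_between h.sA h.sx h.sB h.ss' h.Ax h.s'B.symm h.AB.ne h.s'A.ne'
    h.Bx.ne' h.s'x.1.symm).trans (hR.between_iff_between h.sA h.sx h.sL h.ss' h.Ax h.s'L.symm
    h.LA.ne' h.s'A.ne' h.Lx.1.symm h.s'x.1.symm).symm
  have hBx := (hR.between_iff_between h.sx h.sB h.sA h.ss' h.Bx.symm h.s'A.symm h.Ax.ne'
    h.s'x.1.symm h.AB.ne' h.s'B.ne').trans (hR.between_iff_between h.sx h.sB h.sL h.ss' h.Bx.symm
    h.s'L.symm h.Lx.1.symm h.s'x.1.symm h.LB.1.symm h.s'B.ne').symm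
  have hneA : R.param s x ≠ R.param s A := param_ne h.sx h.sA h.Ax.ne'
  have hneB : R.param s x ≠ R.param s B := param_ne h.sx h.sB h.Bx.ne'
  grind [between_iff]

theorem uncutGap (h : GapConfig G s s' L A B Q x) (hR : R.HasNoncrossingLinks)
    (hs : R.AvoidsGaps s s' L A B Q) (hA : ¬R.Between A s L B) (hB : ¬R.Between B s Q A) :
    R.UncutGap s s' L A B Q x := by
  obtain ⟨hLAB, hABQ⟩ := h.between_rimPath hR hs
  have hAxB := h.between_apex_pole hR hs
  exact
  { toGapConfig := h
    s_LAx := by grind [between_iff]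
    s_AxB := hAxB
    s_xBQ := by grind [between_iff]
    s_As'B := hs.2.1
    A_sxB := h.between_apex hR hA
    A_sLB := hA
    A_ss'B := (h.between_rim_iff hR).not.1 hA
    B_sxA := h.swap.between_apex hR hB
    B_sQA := hB
    B_ss'A := (h.swap.between_rim_iff hR).not.1 hB }

theorem not_between_both (h : GapConfig G s s' L A B Q x) (hR : R.HasNoncrossingLinks) :
    ¬(R.Between A s L B ∧ R.Between A s' L B) := by
  rw [h.between_rim_iff hR, h.between_rim_iff' hR]
  grind [between_iff]

theorem exists_between (h : GapConfig G u v L A B Q x) (h' : GapConfig G v u L A B Q y)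
    (hR : R.HasNoncrossingLinks) (hu : R.AvoidsGaps u v L A B Q) (hv : R.AvoidsGaps v u L A B Q) :
    (R.Between A u L B ∨ R.Between A v L B) ∧ (R.Between B u Q A ∨ R.Between B v Q A) := by
  have hxGap := fun hA hB => (h.uncutGap hR hu hA hB).between_otherPole hR
  have hyGap := fun hA hB => (h'.uncutGap hR hv hA hB).between_otherPole hR
  have hA := h.not_between_both hR
  have hB := h.swap.not_between_both hR
  tauto

theorem not_between_of_between (h : GapConfig G u v L A B Q x) (hR : R.HasNoncrossingLinks)
    (hL : R.Between A u L B ∨ R.Between A v L B) : ¬(R.Between A u B L ∨ R.Between A v B L) := by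
  have huB := hR.between_iff_between h.sA.symm h.LA.symm h.AB h.s'A.symm h.sL h.s'B.symm h.sB.ne
    h.ss'.ne h.LB.1 h.s'L.ne'
  have hvB := hR.between_iff_between h.s'A.symm h.LA.symm h.AB h.sA.symm h.s'L h.sB.symm h.s'B.ne
    h.ss'.ne' h.LB.1 h.sL.ne'
  rw [h.between_rim_iff hR, h.between_rim_iff' hR] at hL
  rw [huB, hvB]
  grind [between_iff]

end GapConfig

theorem OneStringRep.HasNoncrossingLinks.not_between_of_between {V : Type} {G : SimpleGraph V}
    {R : OneStringRep G} {s s' a b c d : V} (hR : R.HasNoncrossingLinks) (hss' : G.Adj s s')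
    (hs : ∀ x ∈ ({a, b, c, d} : Set V), G.Adj s x ∧ G.Adj s' x) (hab : G.Adj a b) (hcd : G.Adj c d)
    (hac : a ≠ c) (had : a ≠ d) (hbd : b ≠ d) (h : R.Between s a s' b) : ¬R.Between s c s' d := by
  intro h'
  simp only [Set.mem_insert_iff, Set.mem_singleton_iff, forall_eq_or_imp, forall_eq] at hs
  obtain ⟨⟨hsa, hs'a⟩, ⟨hsb, hs'b⟩, ⟨hsc, hs'c⟩, hsd, hs'd⟩ := hs
  have hd : R.Between s a d b := hR hsa hsb hss' hsd hab hs'd hs'a.ne' had hs'b.ne' hbd h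
  have ha : R.Between s c a d := hR hsc hsd hss' hsa hcd hs'a hs'c.ne' hac.symm hs'd.ne' had.symm h'
  rcases eq_or_ne b c with rfl | hbc
  · grind [between_iff]
  · have hc : R.Between s a c b := hR hsa hsb hss' hsc hab hs'c hs'a.ne' hac hs'b.ne' hbc h
    have hb : R.Between s c b d :=
      hR hsc hsd hss' hsb hcd hs'b hs'c.ne' hbc.symm hs'd.ne' hbd.symm h'
    grind [between_iff]

/-! ### Angles in plane drawings -/

/-- Twice the signed area of the triangle `p q r`, positive if `p`, `q`, `r` are in counterclockwise
order. -/
def orient {K : Type*} [Sub K] [Mul K] (p q r : K × K) : K :=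
  (q.1 - p.1) * (r.2 - p.2) - (q.2 - p.2) * (r.1 - p.1)

/-- The point `w` lies in the open convex cone with apex `b` spanned by `u` and `v`. -/
def InCone (b u v w : ℝ × ℝ) : Prop :=
  0 < orient b u w * orient b u v ∧ 0 < orient b w v * orient b u v

section Orient

open Real

variable {b p q u v w w' x y z : ℝ × ℝ} {l m : ℝ}

theorem orient_swap (p q r : ℝ × ℝ) : orient q p r = -orient p q r := by
  simp only [orient]
  ring

theorem orient_intCast (p q r : ℤ × ℤ) :
    orient (p.map Int.cast Int.cast) (q.map Int.cast Int.cast) (r.map Int.cast Int.cast) =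
      ((orient p q r : ℤ) : ℝ) := by
  simp only [orient, Prod.map_fst, Prod.map_snd]
  push_cast
  rfl

theorem orient_affineComb (hlm : l + m = 1) :
    orient p q (l • x + m • y) = l * orient p q x + m * orient p q y := by
  obtain rfl : m = 1 - l := by linarith
  simp only [orient, Prod.fst_add, Prod.snd_add, Prod.smul_fst, Prod.smul_snd, smul_eq_mul]
  ring

theorem orient_eq_zero_of_mem_segment (hz : z ∈ segment ℝ p q) : orient p q z = 0 := by
  obtain ⟨l, m, -, -, hlm, rfl⟩ := hz
  rw [orient_affineComb hlm, orient, orient]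
  ring

theorem segment_inter_segment_eq_empty (h : 0 < orient p q x * orient p q y) :
    segment ℝ p q ∩ segment ℝ x y = ∅ := by
  refine Set.eq_empty_of_forall_notMem fun z ⟨hpq, l, m, hl, hm, hlm, hz⟩ => ?_
  have hzero := orient_eq_zero_of_mem_segment hpq
  rw [← hz, orient_affineComb hlm] at hzero
  rcases pos_and_pos_or_neg_and_neg_of_mul_pos h with ⟨hx, hy⟩ | ⟨hx, hy⟩
  · exact (convex_Ioi (0 : ℝ) hx hy hl hm hlm).ne' hzero
  · exact (convex_Iio (0 : ℝ) hx hy hl hm hlm).ne hzero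

theorem segment_inter_segment_eq_singleton (h : orient p x y ≠ 0) :
    segment ℝ p x ∩ segment ℝ p y = {p} := by
  refine Set.Subset.antisymm ?_ (Set.singleton_subset_iff.2
    ⟨left_mem_segment ℝ p x, left_mem_segment ℝ p y⟩)
  rintro z ⟨hpx, l, m, -, -, hlm, rfl⟩
  have hzero := orient_eq_zero_of_mem_segment hpx
  have hm : m = 0 := by
    rw [orient_affineComb hlm, orient_eq_zero_of_mem_segment (left_mem_segment ℝ p x), mul_zero,
      zero_add] at hzero
    exact (mul_eq_zero.1 hzero).resolve_right h
  obtain rfl : l = 1 := by linarith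
  simp [hm]

theorem exists_eq_add_smul_cos_sin (h : b ≠ x) :
    ∃ r : ℝ, 0 < r ∧ x = b + r • (cos (angleAt b x), sin (angleAt b x)) := by
  have hne : (⟨x.1 - b.1, x.2 - b.2⟩ : ℂ) ≠ 0 := fun h0 =>
    h (Prod.ext (sub_eq_zero.1 (congrArg Complex.re h0)).symm
      (sub_eq_zero.1 (congrArg Complex.im h0)).symm)
  refine ⟨_, norm_pos_iff.2 hne, Prod.ext ?_ ?_⟩
  · exact (add_eq_of_eq_sub' (Complex.norm_mul_cos_arg _)).symm
  · exact (add_eq_of_eq_sub' (Complex.norm_mul_sin_arg _)).symm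

theorem exists_orient_eq_mul_sin (hx : b ≠ x) (hy : b ≠ y) :
    ∃ r : ℝ, 0 < r ∧ orient b x y = r * sin (angleAt b y - angleAt b x) := by
  obtain ⟨r, hr, hxr⟩ := exists_eq_add_smul_cos_sin hx
  obtain ⟨r', hr', hyr⟩ := exists_eq_add_smul_cos_sin hy
  refine ⟨r * r', mul_pos hr hr', ?_⟩
  generalize angleAt b x = α at hxr ⊢
  generalize angleAt b y = β at hyr ⊢
  rw [hxr, hyr, sin_sub]
  simp only [orient, Prod.fst_add, Prod.snd_add, Prod.smul_fst, Prod.smul_snd]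
  ring

theorem inCone_iff_sin (hu : b ≠ u) (hv : b ≠ v) (hw : b ≠ w) :
    InCone b u v w ↔
      0 < sin (angleAt b w - angleAt b u) * sin (angleAt b v - angleAt b u) ∧
        0 < sin (angleAt b v - angleAt b w) * sin (angleAt b v - angleAt b u) := by
  obtain ⟨r, hr, huw⟩ := exists_orient_eq_mul_sin hu hw
  obtain ⟨r', hr', hwv⟩ := exists_orient_eq_mul_sin hw hv
  obtain ⟨r'', hr'', huv⟩ := exists_orient_eq_mul_sin hu hv
  rw [InCone, huw, hwv, huv, mul_mul_mul_comm r, mul_mul_mul_comm r',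
    mul_pos_iff_of_pos_left (mul_pos hr hr''), mul_pos_iff_of_pos_left (mul_pos hr' hr'')]

theorem sin_pos_iff_of_mem_Ioo {t : ℝ} (ht : t ∈ Set.Ioo (-(2 * π)) (2 * π)) :
    0 < sin t ↔ t ∈ Set.Ioo 0 π ∨ t < -π := by
  obtain ⟨ht₀, ht₁⟩ := ht
  refine ⟨fun h => ?_, ?_⟩
  · by_contra! hcon
    obtain ⟨hIoo, hpi⟩ := hcon
    rcases le_or_gt t 0 with h0 | h0
    · exact h.not_ge (sin_nonpos_of_nonpos_of_neg_pi_le h0 hpi)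
    · have hpi' : π ≤ t := not_lt.1 fun hlt => hIoo ⟨h0, hlt⟩
      rw [← sin_sub_two_pi] at h
      exact h.not_ge (sin_nonpos_of_nonpos_of_neg_pi_le (by linarith) (by linarith))
  · rintro (⟨h0, hpi⟩ | hpi)
    · exact sin_pos_of_pos_of_lt_pi h0 hpi
    · rw [← sin_add_two_pi]
      exact sin_pos_of_pos_of_lt_pi (by linarith) (by linarith)

theorem sin_neg_iff_of_mem_Ioo {t : ℝ} (ht : t ∈ Set.Ioo (-(2 * π)) (2 * π)) :
    sin t < 0 ↔ t ∈ Set.Ioo (-π) 0 ∨ π < t := by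
  rw [← neg_pos, ← sin_neg, sin_pos_iff_of_mem_Ioo ⟨by linarith [ht.2], by linarith [ht.1]⟩,
    Set.mem_Ioo, Set.mem_Ioo, neg_pos, neg_lt, neg_lt_neg_iff, and_comm]

theorem angleAt_sub_angleAt_mem_Ioo (b x y : ℝ × ℝ) :
    angleAt b x - angleAt b y ∈ Set.Ioo (-(2 * π)) (2 * π) := by
  obtain ⟨hx, hx'⟩ := Complex.arg_mem_Ioc ⟨x.1 - b.1, x.2 - b.2⟩
  obtain ⟨hy, hy'⟩ := Complex.arg_mem_Ioc ⟨y.1 - b.1, y.2 - b.2⟩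
  constructor <;> unfold angleAt <;> linarith

theorem inCone_iff_of_sub_lt_pi (hu : b ≠ u) (hv : b ≠ v) (hw : b ≠ w)
    (huv : angleAt b u < angleAt b v) (hpi : angleAt b v - angleAt b u < π) :
    InCone b u v w ↔ angleAt b u < angleAt b w ∧ angleAt b w < angleAt b v := by
  have hpos : 0 < sin (angleAt b v - angleAt b u) := sin_pos_of_pos_of_lt_pi (by linarith) hpi
  have hsub := angleAt_sub_angleAt_mem_Ioo b
  rw [inCone_iff_sin hu hv hw, mul_pos_iff_of_pos_right hpos, mul_pos_iff_of_pos_right hpos,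
    sin_pos_iff_of_mem_Ioo (hsub w u), sin_pos_iff_of_mem_Ioo (hsub v w)]
  grind

theorem inCone_iff_of_pi_lt_sub (hu : b ≠ u) (hv : b ≠ v) (hw : b ≠ w)
    (hpi : π < angleAt b v - angleAt b u) :
    InCone b u v w ↔ angleAt b w < angleAt b u ∨ angleAt b v < angleAt b w := by
  have hvu := angleAt_sub_angleAt_mem_Ioo b v u
  have hwu := angleAt_sub_angleAt_mem_Ioo b w u
  have hvw := angleAt_sub_angleAt_mem_Ioo b v w
  have hneg : sin (angleAt b v - angleAt b u) < 0 := (sin_neg_iff_of_mem_Ioo hvu).2 (.inr hpi)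
  rw [inCone_iff_sin hu hv hw, ← neg_mul_neg, ← neg_mul_neg (sin (angleAt b v - angleAt b w)),
    mul_pos_iff_of_pos_right (neg_pos.2 hneg), mul_pos_iff_of_pos_right (neg_pos.2 hneg), neg_pos,
    neg_pos, sin_neg_iff_of_mem_Ioo hwu, sin_neg_iff_of_mem_Ioo hvw]
  have := pi_pos
  grind

theorem mem_segment_of_angleAt_sub_eq_pi (hu : b ≠ u) (hv : b ≠ v)
    (hpi : angleAt b v - angleAt b u = π) : b ∈ segment ℝ u v := by
  obtain ⟨r, hr, hur⟩ := exists_eq_add_smul_cos_sin hu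
  obtain ⟨r', hr', hvr⟩ := exists_eq_add_smul_cos_sin hv
  rw [sub_eq_iff_eq_add'.1 hpi] at hvr
  generalize angleAt b u = α at hur hvr
  refine ⟨r' / (r + r'), r / (r + r'), by positivity, by positivity, by field_simp; ring, ?_⟩
  rw [hur, hvr]
  ext <;> simp [cos_add_pi, sin_add_pi] <;> field_simp <;> ring

theorem eq_add_smul_add_smul (h : orient b u v ≠ 0) (z : ℝ × ℝ) :
    z = b + (orient b z v / orient b u v) • (u - b) + (orient b u z / orient b u v) • (v - b) := by
  ext <;> simp only [Prod.fst_add, Prod.snd_add, Prod.smul_fst, Prod.smul_snd, Prod.fst_sub,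
    Prod.snd_sub, smul_eq_mul] <;> field_simp <;> simp only [orient] <;> ring

theorem mem_sides_of_min_eq_zero {E : Type*} [AddCommGroup E] [Module ℝ E] {b u v : E} {l m : ℝ}
    (h : min (min l m) (1 - (l + m)) = 0) :
    b + l • (u - b) + m • (v - b) ∈ segment ℝ b u ∪ segment ℝ b v ∪ segment ℝ u v := by
  obtain ⟨hlm, hsum⟩ := le_min_iff.1 h.ge
  obtain ⟨hl, hm⟩ := le_min_iff.1 hlm
  have hzero : l = 0 ∨ m = 0 ∨ 1 - (l + m) = 0 := by grind
  rcases hzero with rfl | rfl | hzero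
  · exact .inl (.inr ⟨1 - m, m, by linarith, hm, by ring, by module⟩)
  · exact .inl (.inl ⟨1 - l, l, by linarith, hl, by ring, by module⟩)
  · obtain rfl : m = 1 - l := by linarith
    exact .inr ⟨l, 1 - l, hl, hm, by ring, by module⟩

theorem add_lt_one_of_segment_inter_segment_eq_empty {E : Type*} [AddCommGroup E] [Module ℝ E]
    {b u v : E} {l m : ℝ} (hl : 0 < l) (hm : 0 < m)
    (h : segment ℝ b (b + l • (u - b) + m • (v - b)) ∩ segment ℝ u v = ∅) : l + m < 1 := by
  by_contra! hlm
  have hinv : (l + m)⁻¹ ≤ 1 := inv_le_one_of_one_le₀ hlm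
  refine Set.eq_empty_iff_forall_notMem.1 h (((l + m)⁻¹ * l) • u + ((l + m)⁻¹ * m) • v) ⟨?_, ?_⟩
  · refine ⟨1 - (l + m)⁻¹, (l + m)⁻¹, sub_nonneg.2 hinv, by positivity, by ring, ?_⟩
    match_scalars <;> field_simp
    ring
  · exact ⟨_, _, by positivity, by positivity, by field_simp, rfl⟩

theorem InCone.inCone_of_disjoint (h : InCone b u v w) (hbw : segment ℝ b w ∩ segment ℝ u v = ∅)
    (hbu : segment ℝ w w' ∩ segment ℝ b u = ∅) (hbv : segment ℝ w w' ∩ segment ℝ b v = ∅)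
    (huv : segment ℝ w w' ∩ segment ℝ u v = ∅) : InCone b u v w' := by
  have hD : orient b u v ≠ 0 := right_ne_zero_of_mul h.1.ne'
  set l : ℝ × ℝ → ℝ := fun z => orient b z v / orient b u v with hldef
  set m : ℝ × ℝ → ℝ := fun z => orient b u z / orient b u v with hmdef
  have hcone : ∀ z, InCone b u v z ↔ 0 < m z ∧ 0 < l z := fun z => by
    rw [hldef, hmdef, div_pos_iff, div_pos_iff, ← mul_pos_iff, ← mul_pos_iff, InCone]
  set f : ℝ × ℝ → ℝ := fun z => min (min (l z) (m z)) (1 - (l z + m z)) with hfdef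
  have hf : Continuous f := by
    simp only [hfdef, hldef, hmdef, orient]
    fun_prop
  have hfw : 0 < f w := by
    obtain ⟨hm, hl⟩ := (hcone w).1 h
    rw [eq_add_smul_add_smul hD w] at hbw
    exact lt_min (lt_min hl hm) (sub_pos.2 (add_lt_one_of_segment_inter_segment_eq_empty hl hm hbw))
  have hfz : ∀ z ∈ segment ℝ w w', f z ≠ 0 := fun z hz hzero => by
    have hsides := mem_sides_of_min_eq_zero (b := b) (u := u) (v := v) hzero
    rw [← eq_add_smul_add_smul hD z] at hsides
    rcases hsides with (hside | hside) | hside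
    · exact hbu.subset ⟨hz, hside⟩
    · exact hbv.subset ⟨hz, hside⟩
    · exact huv.subset ⟨hz, hside⟩
  have hfw' : 0 < f w' := by
    by_contra! hneg
    obtain ⟨z, hz, hzero⟩ := (convex_segment w w').isPreconnected.intermediate_value
      (right_mem_segment ℝ w w') (left_mem_segment ℝ w w') hf.continuousOn ⟨hneg, hfw.le⟩
    exact hfz z hz hzero
  obtain ⟨hl, hm⟩ := lt_min_iff.1 (lt_min_iff.1 hfw').1
  exact (hcone w').2 ⟨hm, hl⟩

end Orient

namespace IsPlaneDrawing

variable {V : Type} {G : SimpleGraph V} {p : V → ℝ × ℝ} {b u v w w' : V}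

theorem inCone (hp : IsPlaneDrawing G p) (hu : G.Adj b u) (hv : G.Adj b v) (hw : G.Adj b w)
    (hw' : G.Adj b w') (huv : G.Adj u v) (hww' : G.Adj w w') (huw : u ≠ w) (huw' : u ≠ w')
    (hvw : v ≠ w) (hvw' : v ≠ w') (h : InCone (p b) (p u) (p v) (p w)) :
    InCone (p b) (p u) (p v) (p w') :=
  h.inCone_of_disjoint (hp.2.1 b w u v hw huv hu.ne hv.ne huw.symm hvw.symm)
    (hp.2.1 w w' b u hww' hu hw.ne' huw.symm hw'.ne' huw'.symm)
    (hp.2.1 w w' b v hww' hv hw.ne' hvw.symm hw'.ne' hvw'.symm)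
    (hp.2.1 w w' u v hww' huv huw.symm hvw.symm huw'.symm hvw'.symm)

theorem angleAt_mem_Ioo (hp : IsPlaneDrawing G p) (hu : G.Adj b u) (hv : G.Adj b v)
    (hw : G.Adj b w) (hw' : G.Adj b w') (huv : G.Adj u v) (hww' : G.Adj w w') (huw : u ≠ w)
    (huw' : u ≠ w') (hvw : v ≠ w) (hvw' : v ≠ w')
    (hinj : Set.InjOn (fun x => angleAt (p b) (p x)) (G.neighborSet b))
    (h : angleAt (p b) (p w) ∈ Set.Ioo (angleAt (p b) (p u)) (angleAt (p b) (p v))) :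
    angleAt (p b) (p w') ∈ Set.Ioo (angleAt (p b) (p u)) (angleAt (p b) (p v)) := by
  have hne : ∀ {x}, G.Adj b x → p b ≠ p x := fun hx => hp.1.ne hx.ne
  have hlt := h.1.trans h.2
  rcases lt_trichotomy (angleAt (p b) (p v) - angleAt (p b) (p u)) Real.pi with hpi | hpi | hpi
  · have hiff := fun {x} (hx : G.Adj b x) =>
      inCone_iff_of_sub_lt_pi (hne hu) (hne hv) (hne hx) hlt hpi
    exact (hiff hw').1 (hp.inCone hu hv hw hw' huv hww' huw huw' hvw hvw' ((hiff hw).2 h))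
  · exact absurd (mem_segment_of_angleAt_sub_eq_pi (hne hu) (hne hv) hpi)
      (hp.2.2.2 u v b huv hu.ne hv.ne)
  · have hiff := fun {x} (hx : G.Adj b x) =>
      inCone_iff_of_pi_lt_sub (hne hu) (hne hv) (hne hx) hpi
    by_contra hout
    have hneu := hinj.ne hu hw' huw'
    have hnev := hinj.ne hv hw' hvw'
    have hcone := hp.inCone hu hv hw' hw huv hww'.symm huw' huw hvw' hvw
      ((hiff hw').2 (by grind))
    grind

theorem angleAt_mem_uIoo (hp : IsPlaneDrawing G p) (hu : G.Adj b u) (hv : G.Adj b v)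
    (hw : G.Adj b w) (hw' : G.Adj b w') (huv : G.Adj u v) (hww' : G.Adj w w') (huw : u ≠ w)
    (huw' : u ≠ w') (hvw : v ≠ w) (hvw' : v ≠ w')
    (hinj : Set.InjOn (fun x => angleAt (p b) (p x)) (G.neighborSet b))
    (h : angleAt (p b) (p w) ∈ Set.uIoo (angleAt (p b) (p u)) (angleAt (p b) (p v))) :
    angleAt (p b) (p w') ∈ Set.uIoo (angleAt (p b) (p u)) (angleAt (p b) (p v)) := by
  rcases le_total (angleAt (p b) (p u)) (angleAt (p b) (p v)) with hle | hle
  · rw [Set.uIoo_of_le hle] at h ⊢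
    exact hp.angleAt_mem_Ioo hu hv hw hw' huv hww' huw huw' hvw hvw' hinj h
  · rw [Set.uIoo_of_ge hle] at h ⊢
    exact hp.angleAt_mem_Ioo hv hu hw hw' huv.symm hww' hvw hvw' huw huw' hinj h

end IsPlaneDrawing

theorem isPlaneDrawing_fromRel_of_orient {V : Type} {r : V → V → Prop} {p : V → ℝ × ℝ}
    (hp : Function.Injective p)
    (hne : ∀ u v w, r u v → w ≠ u → w ≠ v → orient (p u) (p v) (p w) ≠ 0)
    (hdisj : ∀ u v x y, r u v → r x y → u ≠ x → u ≠ y → v ≠ x → v ≠ y →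
      0 < orient (p u) (p v) (p x) * orient (p u) (p v) (p y) ∨
        0 < orient (p x) (p y) (p u) * orient (p x) (p y) (p v)) :
    IsPlaneDrawing (SimpleGraph.fromRel r) p := by
  have hne' : ∀ u v w, (SimpleGraph.fromRel r).Adj u v → w ≠ u → w ≠ v →
      orient (p u) (p v) (p w) ≠ 0 := by
    rintro u v w ⟨-, huv | hvu⟩ hwu hwv
    · exact hne u v w huv hwu hwv
    · exact orient_swap (p v) (p u) (p w) ▸ neg_ne_zero.2 (hne v u w hvu hwv hwu)
  refine ⟨hp, fun u v x y huv hxy hux huy hvx hvy => ?_, fun u v w huv huw hvw => ?_,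
    fun u v w huv hwu hwv hmem => ?_⟩
  · have hinter : ∀ u v x y, r u v → r x y → u ≠ x → u ≠ y → v ≠ x → v ≠ y →
        segment ℝ (p u) (p v) ∩ segment ℝ (p x) (p y) = ∅ := fun u v x y huv hxy hux huy hvx hvy =>
      (hdisj u v x y huv hxy hux huy hvx hvy).elim segment_inter_segment_eq_empty fun h =>
        Set.inter_comm _ _ ▸ segment_inter_segment_eq_empty h
    rcases huv.2 with huv | hvu <;> rcases hxy.2 with hxy | hyx
    · exact hinter u v x y huv hxy hux huy hvx hvy
    · exact segment_symm ℝ (p y) (p x) ▸ hinter u v y x huv hyx huy hux hvy hvx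
    · exact segment_symm ℝ (p v) (p u) ▸ hinter v u x y hvu hxy hvx hvy hux huy
    · rw [segment_symm, segment_symm ℝ (p x)]
      exact hinter v u y x hvu hyx hvy hvx huy hux
  · exact segment_inter_segment_eq_singleton (hne' u v w huv huw.ne' hvw.symm)
  · exact hne' u v w huv hwu hwv (orient_eq_zero_of_mem_segment hmem)

section Rotation

open Set

variable {α β γ : Type*} [LinearOrder β] [LinearOrder γ] {f : α → β} {g : α → γ} {l l' : List α}
  {u v w w' x y : α}

theorem lt_and_lt_or_of_pairwise (hf : l.Pairwise (f · < f ·)) (hg : l.Pairwise (g · < g ·))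
    (hx : x ∈ l) (hy : y ∈ l) (hxy : x ≠ y) : f x < f y ∧ g x < g y ∨ f y < f x ∧ g y < g x :=
  have : Std.Symm fun x y => f x < f y ∧ g x < g y ∨ f y < f x ∧ g y < g x := ⟨fun _ _ => Or.symm⟩
  List.Pairwise.forall (R := fun x y => f x < f y ∧ g x < g y ∨ f y < f x ∧ g y < g x)
    ((hf.and hg).imp Or.inl) hx hy hxy

theorem mem_uIoo_iff_of_isRotated (hf : l.Pairwise (f · < f ·))
    (hg : l'.Pairwise (g · < g ·)) (hr : l ~r l') (hu : u ∈ l) (hv : v ∈ l) (hw : w ∈ l)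
    (hw' : w' ∈ l) (huw : u ≠ w) (huw' : u ≠ w') (hvw : v ≠ w) (hvw' : v ≠ w')
    (h : f w ∈ uIoo (f u) (f v) ↔ f w' ∈ uIoo (f u) (f v)) :
    g w ∈ uIoo (g u) (g v) ↔ g w' ∈ uIoo (g u) (g v) := by
  obtain ⟨r, rfl⟩ := hr
  obtain ⟨l₁, l₂, hl, hr⟩ : ∃ l₁ l₂, l = l₁ ++ l₂ ∧ l.rotate r = l₂ ++ l₁ :=
    ⟨_, _, (List.take_append_drop _ l).symm, List.rotate_eq_drop_append_take_mod⟩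
  rw [hr, List.pairwise_append] at hg
  rw [hl, List.pairwise_append] at hf
  simp only [hl, List.mem_append] at hu hv hw hw'
  obtain ⟨hf₁, hf₂, hf₁₂⟩ := hf
  obtain ⟨hg₂, hg₁, hg₂₁⟩ := hg
  have h₁ : ∀ x ∈ l₁, ∀ y ∈ l₁, x ≠ y → f x < f y ∧ g x < g y ∨ f y < f x ∧ g y < g x :=
    fun x hx y hy => lt_and_lt_or_of_pairwise hf₁ hg₁ hx hy
  have h₂ : ∀ x ∈ l₂, ∀ y ∈ l₂, x ≠ y → f x < f y ∧ g x < g y ∨ f y < f x ∧ g y < g x :=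
    fun x hx y hy => lt_and_lt_or_of_pairwise hf₂ hg₂ hx hy
  clear hf₁ hf₂ hg₁ hg₂ hl hr
  simp only [uIoo, mem_Ioo, inf_lt_iff, lt_sup_iff] at h ⊢
  rcases hu with hu | hu <;> rcases hv with hv | hv <;> rcases hw with hw | hw <;>
    rcases hw' with hw' | hw' <;> grind

end Rotation

theorem OrderPreserving.hasNoncrossingLinks {V : Type} {G : SimpleGraph V} {p : V → ℝ × ℝ}
    {R : OneStringRep G} (hp : IsPlaneDrawing G p) (h : OrderPreserving G p R) :
    R.HasNoncrossingLinks := by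
  intro b u v w w' hu hv hw hw' huv hww' huw huw' hvw hvw'
  obtain ⟨l, -, hl, hangle, r, dir, t, ht, hdir⟩ := h b
  have ht_param : ∀ x, G.Adj b x → t x = R.param b x := fun x hx =>
    OneStringRep.eq_param hx (ht x ((hl x).2 hx)).1 (ht x ((hl x).2 hx)).2
  have hinj : Set.InjOn (fun x => angleAt (p b) (p x)) (G.neighborSet b) := fun x hx y hy hxy => by
    by_contra hne
    have := lt_and_lt_or_of_pairwise hangle hangle ((hl x).2 hx) ((hl y).2 hy) hne
    grind
  have hiff : angleAt (p b) (p w) ∈ Set.uIoo (angleAt (p b) (p u)) (angleAt (p b) (p v)) ↔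
      angleAt (p b) (p w') ∈ Set.uIoo (angleAt (p b) (p u)) (angleAt (p b) (p v)) :=
    ⟨hp.angleAt_mem_uIoo hu hv hw hw' huv hww' huw huw' hvw hvw' hinj,
      hp.angleAt_mem_uIoo hu hv hw' hw huv hww'.symm huw' huw hvw' hvw hinj⟩
  have hmem := fun {γ : Type} [LinearOrder γ] (g : V → γ)
      (hg : (l.rotate r).Pairwise (g · < g ·)) =>
    mem_uIoo_iff_of_isRotated hangle hg ⟨r, rfl⟩ ((hl u).2 hu) ((hl v).2 hv) ((hl w).2 hw)
      ((hl w').2 hw') huw huw' hvw hvw' hiff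
  have hbetween : t w ∈ Set.uIoo (t u) (t v) ↔ t w' ∈ Set.uIoo (t u) (t v) := by
    cases dir
    · simpa only [Set.uIoo_toDual, Set.mem_preimage, OrderDual.ofDual_toDual] using
        hmem (fun x => OrderDual.toDual (t x)) (by simpa using hdir)
    · exact hmem t (by simpa using hdir)
  rw [ht_param w hw, ht_param w' hw', ht_param u hu, ht_param v hv] at hbetween
  exact hbetween.1

/-! ### The stellated bipyramid -/

/-- The vertices of `stellatedBipyramid`: two poles, a path of `13` rim vertices, and for each pole
`s` and each `j < 12` the apex over the face spanned by `s` and the rim vertices `j` and `j + 1`. -/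
inductive BipyramidVertex
  | pole (s : Fin 2)
  | rim (i : Fin 13)
  | apex (s : Fin 2) (j : Fin 12)
  deriving DecidableEq, Fintype

namespace BipyramidVertex

/-- The neighbours of a vertex of `stellatedBipyramid` that precede it in the construction order of
a 3-tree: poles, then rim, then apices. -/
def parents : BipyramidVertex → List BipyramidVertex
  | pole 0 => []
  | pole 1 => [pole 0]
  | rim ⟨0, _⟩ => [pole 0, pole 1]
  | rim ⟨i + 1, _⟩ => [pole 0, pole 1, rim ⟨i, by omega⟩]
  | apex s j => [pole s, rim j.castSucc, rim j.succ]

/-- The index of a vertex in the construction order of `stellatedBipyramid`. -/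
def rank : BipyramidVertex → Fin 39
  | pole s => s.castLE (by decide)
  | rim i => (i.natAdd 2).castLE (by decide)
  | apex s j => (finProdFinEquiv (s, j)).natAdd 15

/-- A drawing of `stellatedBipyramid`: the rim vertices are on a parabola and the poles far away on
both sides of it, so an apex only has to be slightly off the chord of the parabola it is joined
to. -/
def position : BipyramidVertex → ℤ × ℤ
  | pole s => (0, 1000 - 2000 * s.val)
  | rim i => (4 * i.val + 4, 4 * i.val * i.val)
  | apex s j => (4 * j.val + 6, 4 * j.val * (j.val + 1) + 5 - 6 * s.val)

end BipyramidVertex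

section StellatedBipyramid

open BipyramidVertex

/-- The bipyramid over a path of `13` rim vertices with two adjacent poles, with an apex joined to
the corners of each face spanned by a pole and a rim edge. -/
abbrev stellatedBipyramid : SimpleGraph BipyramidVertex :=
  SimpleGraph.fromRel fun u v => u ∈ parents v

theorem rank_bijective : Function.Bijective rank :=
  (Fintype.bijective_iff_injective_and_card rank).2 ⟨by decide +kernel, by decide +kernel⟩

theorem isClique_parents (v : BipyramidVertex) :
    stellatedBipyramid.IsClique {w | w ∈ parents v} := by
  change ∀ u ∈ parents v, ∀ w ∈ parents v, u ≠ w → stellatedBipyramid.Adj u w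
  revert v
  decide +kernel

theorem mem_parents_iff (v w : BipyramidVertex) :
    w ∈ parents v ↔ stellatedBipyramid.Adj v w ∧ rank w < rank v := by
  revert v w
  decide +kernel

theorem card_parents (v : BipyramidVertex) : (parents v).toFinset.card = min 3 (rank v).val := by
  revert v
  decide +kernel

theorem isKTree_stellatedBipyramid : IsKTree 3 stellatedBipyramid := by
  refine ⟨39, Equiv.ofBijective rank rank_bijective, by decide, ?_, fun i hi => ?_⟩
  · change ∀ u, (rank u).val < 3 → ∀ v, (rank v).val < 3 → u ≠ v → stellatedBipyramid.Adj u v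
    decide +kernel
  · obtain ⟨v, rfl⟩ := (Equiv.ofBijective rank rank_bijective).surjective i
    refine ⟨(parents v).toFinset, (card_parents v).trans (min_eq_left hi), fun w => ?_, ?_⟩
    · rw [List.mem_toFinset, mem_parents_iff, Equiv.symm_apply_apply]
      rfl
    · rw [List.coe_toFinset]
      exact isClique_parents v

theorem gapConfig_rim (s : Fin 2) {i : ℕ} (hi : i < 10) :
    GapConfig stellatedBipyramid (pole s) (pole s.rev) (rim ⟨i, by omega⟩) (rim ⟨i + 1, by omega⟩)
      (rim ⟨i + 2, by omega⟩) (rim ⟨i + 3, by omega⟩) (apex s ⟨i + 1, by omega⟩) := by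
  constructor <;> revert s i <;> decide +kernel

theorem position_injective : Function.Injective position := by
  decide +kernel

theorem orient_position_ne_zero (u v w : BipyramidVertex) (huv : u ∈ parents v) (hwu : w ≠ u)
    (hwv : w ≠ v) : orient (position u) (position v) (position w) ≠ 0 := by
  have hcheck : ∀ v w, (parents v).all fun u =>
      w = u ∨ w = v ∨ orient (position u) (position v) (position w) ≠ 0 := by
    decide +kernel
  simpa only [hwu, hwv, false_or] using of_decide_eq_true (List.all_eq_true.1 (hcheck v w) u huv)

theorem orient_position_mul_pos (u v x y : BipyramidVertex) (huv : u ∈ parents v)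
    (hxy : x ∈ parents y) (hux : u ≠ x) (huy : u ≠ y) (hvx : v ≠ x) (hvy : v ≠ y) :
    0 < orient (position u) (position v) (position x) *
        orient (position u) (position v) (position y) ∨
      0 < orient (position x) (position y) (position u) *
        orient (position x) (position y) (position v) := by
  have hcheck : ∀ v y, (parents v).all fun u => (parents y).all fun x =>
      u = x ∨ u = y ∨ v = x ∨ v = y ∨
        0 < orient (position u) (position v) (position x) *
            orient (position u) (position v) (position y) ∨
          0 < orient (position x) (position y) (position u) *
            orient (position x) (position y) (position v) := by
    decide +kernel
  simpa only [hux, huy, hvx, hvy, false_or] using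
    of_decide_eq_true (List.all_eq_true.1 (List.all_eq_true.1 (hcheck v y) u huv) x hxy)

theorem isPlaneDrawing_position :
    IsPlaneDrawing stellatedBipyramid fun v => (position v).map Int.cast Int.cast := by
  refine isPlaneDrawing_fromRel_of_orient ?_ (fun u v w huv hwu hwv => ?_)
    fun u v x y huv hxy hux huy hvx hvy => ?_
  · exact (Int.cast_injective.prodMap Int.cast_injective).comp position_injective
  · rw [orient_intCast]
    exact_mod_cast orient_position_ne_zero u v w huv hwu hwv
  · simp only [orient_intCast]
    exact_mod_cast orient_position_mul_pos u v x y huv hxy hux huy hvx hvy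

variable {R : OneStringRep stellatedBipyramid}

/-- The string of the pole `s` meets that of the other pole in the gap between the `j`-th and the
`(j + 1)`-st rim vertex. -/
def CutsRim (R : OneStringRep stellatedBipyramid) (s : Fin 2) (j : Fin 12) : Prop :=
  R.Between (pole s) (rim j.castSucc) (pole s.rev) (rim j.succ)

theorem CutsRim.eq (hR : R.HasNoncrossingLinks) {s : Fin 2} {i j : Fin 12} (hi : CutsRim R s i)
    (hj : CutsRim R s j) : i = j := by
  wlog hij : i < j generalizing i j
  · exact (not_lt.1 hij).eq_or_lt.elim Eq.symm fun hji => (this hj hi hji).symm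
  have hrim : ∀ i : Fin 12, stellatedBipyramid.Adj (rim i.castSucc) (rim i.succ) := by
    decide +kernel
  have hpoles : ∀ s : Fin 2, stellatedBipyramid.Adj (pole s) (pole s.rev) := by decide +kernel
  have hpole : ∀ (s : Fin 2) (i : Fin 13), stellatedBipyramid.Adj (pole s) (rim i) := by
    decide +kernel
  have hmem : ∀ x ∈ ({rim i.castSucc, rim i.succ, rim j.castSucc, rim j.succ} :
      Set BipyramidVertex), stellatedBipyramid.Adj (pole s) x ∧
        stellatedBipyramid.Adj (pole s.rev) x := by
    rintro x (rfl | rfl | rfl | rfl) <;> exact ⟨hpole _ _, hpole _ _⟩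
  refine absurd hj (hR.not_between_of_between (hpoles s) hmem (hrim i) (hrim j) ?_ ?_ ?_ hi)
  all_goals
    rw [Ne, rim.injEq, Fin.ext_iff]
    simp only [Fin.val_castSucc, Fin.val_succ]
    omega

theorem exists_forall_not_cutsRim_of_ne (hR : R.HasNoncrossingLinks) (s : Fin 2) :
    ∃ c : Fin 12, ∀ j ≠ c, ¬CutsRim R s j := by
  by_cases! h : ∃ c, CutsRim R s c
  · exact h.imp fun c hc j hj hcut => hj (hcut.eq hR hc)
  · exact ⟨0, fun j _ => h j⟩

/-- The rim edges form three blocks of four, and each pole cuts at most one rim edge. -/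
theorem exists_block_not_cutsRim (hR : R.HasNoncrossingLinks) :
    ∃ k < 3, ∀ (s : Fin 2) (j : Fin 12), j.val / 4 = k → ¬CutsRim R s j := by
  choose c hc using exists_forall_not_cutsRim_of_ne hR
  obtain ⟨k, hk, hk0, hk1⟩ : ∃ k < 3, (c 0).val / 4 ≠ k ∧ (c 1).val / 4 ≠ k := by
    by_contra! h
    have := h 0
    have := h 1
    have := h 2
    omega
  refine ⟨k, hk, fun s j hj => hc s j ?_⟩
  rintro rfl
  fin_cases s
  exacts [hk0 hj, hk1 hj]

theorem exists_between_rim (hR : R.HasNoncrossingLinks) {i : ℕ} (hi : i < 10)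
    (hcut : ∀ (s : Fin 2) (j : Fin 12), i ≤ j.val → j.val ≤ i + 2 → ¬CutsRim R s j) :
    (R.Between (rim ⟨i + 1, by omega⟩) (pole 0) (rim ⟨i, by omega⟩) (rim ⟨i + 2, by omega⟩) ∨
      R.Between (rim ⟨i + 1, by omega⟩) (pole 1) (rim ⟨i, by omega⟩) (rim ⟨i + 2, by omega⟩)) ∧
    (R.Between (rim ⟨i + 2, by omega⟩) (pole 0) (rim ⟨i + 3, by omega⟩) (rim ⟨i + 1, by omega⟩) ∨
      R.Between (rim ⟨i + 2, by omega⟩) (pole 1) (rim ⟨i + 3, by omega⟩)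
        (rim ⟨i + 1, by omega⟩)) := by
  have havoid (s : Fin 2) : R.AvoidsGaps (pole s) (pole s.rev) (rim ⟨i, by omega⟩)
      (rim ⟨i + 1, by omega⟩) (rim ⟨i + 2, by omega⟩) (rim ⟨i + 3, by omega⟩) :=
    ⟨hcut s ⟨i, by omega⟩ le_rfl (by simp), hcut s ⟨i + 1, by omega⟩ (by simp) (by simp),
      hcut s ⟨i + 2, by omega⟩ (by simp) le_rfl⟩
  exact (gapConfig_rim 0 hi).exists_between (gapConfig_rim 1 hi) hR (havoid 0) (havoid 1)

theorem not_hasNoncrossingLinks (R : OneStringRep stellatedBipyramid) :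
    ¬R.HasNoncrossingLinks := by
  intro hR
  obtain ⟨k, hk, hcut⟩ := exists_block_not_cutsRim hR
  have hleft := exists_between_rim hR (i := 4 * k) (by omega) fun s j _ _ =>
    hcut s j (by omega)
  have hright := exists_between_rim hR (i := 4 * k + 1) (by omega) fun s j _ _ =>
    hcut s j (by omega)
  exact (gapConfig_rim 0 (i := 4 * k + 1) (by omega)).not_between_of_between hR hright.1 hleft.2

end StellatedBipyramid

/-- There exists a planar 3-tree with no order-preserving 1-string representation
with respect to any of its straight-line plane drawings. -/
theorem stmt_0 :
    ∃ (V : Type) (_ : Fintype V) (G : SimpleGraph V),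
      IsKTree 3 G ∧
      (∃ p : V → ℝ × ℝ, IsPlaneDrawing G p) ∧
      ∀ p : V → ℝ × ℝ, IsPlaneDrawing G p →
        ∀ R : OneStringRep G, ¬ OrderPreserving G p R :=
  ⟨BipyramidVertex, inferInstance, stellatedBipyramid, isKTree_stellatedBipyramid,
    ⟨_, isPlaneDrawing_position⟩,
    fun _ hp R hR => not_hasNoncrossingLinks R (hR.hasNoncrossingLinks hp)⟩
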